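/- arXiv:2212.14172 — 4 statements merged into one kernel-verified Lean document; each statement's English description precedes it below -/
import Mathlib

section
/- Let A be a ring satisfying the minimum condition on principal right ideals (i.e., A is left perfect). Then a right A-module M is ℵ₀-distributive if and only if M is Artinian. -/
/-!
Write `R = Aᵐᵒᵖ`, so that right `A`-modules are left `R`-modules and the hypothesis is the
minimum condition on principal left ideals of `R`. It has two consequences.

* Every nonzero module contains a simple submodule (`exists_simple_le_of_wellFounded`), so the
  socle of any module meets every nonzero submodule.
* `R ⧸ jacobson R` is semisimple (`isSemisimpleModule_quotient_jacobson`), so there are only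
  finitely many simple modules up to isomorphism (`exists_iso_of_infinite_simples`).

Let `M` be `ℵ₀`-distributive. If the socle of a quotient of `M` had infinitely many simple
summands, infinitely many of them would be isomorphic, and their sum would be a forbidden
subfactor. So each such socle has finite length. Given a descending chain of submodules, pass to
the quotient by its intersection: there the chain eventually meets the socle trivially, hence it
reaches zero, that is, it stabilizes (`isArtinian_of_socle`). Conversely, a subfactor of an
Artinian module is Artinian and has no infinite independent family of nonzero submodules.
-/


universe u

open Submodule

/-- A module `M` is `ℵ₀`-distributive if no subfactor of `M` (quotient of a submodule)
is (isomorphic to) a direct sum of infinitely many pairwise isomorphic simple modules.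
The direct sum condition is phrased internally: the subfactor has no independent spanning
family, indexed by an infinite type, of pairwise isomorphic simple submodules. -/
def IsAleph0Distributive (R M : Type u) [Ring R] [AddCommGroup M] [Module R M] : Prop :=
  ¬ ∃ (N : Submodule R M) (P : Submodule R N) (ι : Type u) (_ : Infinite ι)
      (T : ι → Submodule R (N ⧸ P)),
      iSupIndep T ∧ iSup T = ⊤ ∧ (∀ i, IsSimpleModule R (T i)) ∧
        ∀ i j, Nonempty ((T i) ≃ₗ[R] (T j))

/-- A module is distributive if its lattice of submodules is distributive. -/
def IsDistributiveModule (R M : Type u) [Ring R] [AddCommGroup M] [Module R M] : Prop :=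
  ∀ X Y Z : Submodule R M, X ⊓ (Y ⊔ Z) = X ⊓ Y ⊔ X ⊓ Z

/-- A module is completely cyclic if every submodule is cyclic. -/
def IsCompletelyCyclic (R M : Type u) [Ring R] [AddCommGroup M] [Module R M] : Prop :=
  ∀ N : Submodule R M, ∃ m : M, N = span R {m}

/-- A module is Bezout if every finitely generated submodule is cyclic. -/
def IsBezoutModule (R M : Type u) [Ring R] [AddCommGroup M] [Module R M] : Prop :=
  ∀ N : Submodule R M, N.FG → ∃ m : M, N = span R {m}

/-- A ring satisfies the minimum condition on principal right ideals if there is no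
infinite strictly descending chain of principal right ideals. -/
def MinPrincipalRight (A : Type u) [Ring A] : Prop :=
  ¬ ∃ a : ℕ → A, StrictAnti fun n => span Aᵐᵒᵖ ({a n} : Set A)

/-- A ring satisfies the minimum condition on principal left ideals if there is no
infinite strictly descending chain of principal left ideals. -/
def MinPrincipalLeft (A : Type u) [Ring A] : Prop :=
  ¬ ∃ a : ℕ → A, StrictAnti fun n => span A ({a n} : Set A)

/-- A module is indecomposable if it is nonzero and is not the direct sum of two
nonzero submodules. -/
def IsIndecomposableModule (R M : Type u) [Ring R] [AddCommGroup M] [Module R M] : Prop :=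
  Nontrivial M ∧ ∀ N P : Submodule R M, IsCompl N P → N = ⊥ ∨ P = ⊥

/-- A ring `A` has (right) finite representation type if it is right Artinian and has,
up to isomorphism, only finitely many finitely generated indecomposable right modules
(every finitely generated module is isomorphic to a quotient of some `Aⁿ`, so the
representatives may be taken of this form). -/
def HasFiniteRepresentationType (A : Type u) [Ring A] : Prop :=
  IsArtinian Aᵐᵒᵖ A ∧
    ∃ (n : ℕ) (k : Fin n → ℕ) (N : ∀ i, Submodule Aᵐᵒᵖ (Fin (k i) → A)),
      ∀ (M : Type u) [AddCommGroup M] [Module Aᵐᵒᵖ M],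
        Module.Finite Aᵐᵒᵖ M → IsIndecomposableModule Aᵐᵒᵖ M →
          ∃ i, Nonempty (M ≃ₗ[Aᵐᵒᵖ] ((Fin (k i) → A) ⧸ N i))

/-- `M` has only finitely many simple subfactors up to isomorphism. -/
def FinitelyManySimpleSubfactors (R M : Type u) [Ring R] [AddCommGroup M] [Module R M] : Prop :=
  ∃ (n : ℕ) (N : Fin n → Submodule R M) (P : ∀ i, Submodule R (N i)),
    ∀ (N' : Submodule R M) (P' : Submodule R N'), IsSimpleModule R (N' ⧸ P') →
      ∃ i, Nonempty ((N' ⧸ P') ≃ₗ[R] (N i ⧸ P i))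

/-- A module is semi-Artinian if every nonzero quotient module contains a simple submodule. -/
def IsSemiArtinianModule (R M : Type u) [Ring R] [AddCommGroup M] [Module R M] : Prop :=
  ∀ N : Submodule R M, N ≠ ⊤ → ∃ S : Submodule R (M ⧸ N), IsSimpleModule R S

/-- A ring is semilocal if its quotient by the Jacobson radical is semisimple. -/
def IsSemilocalRing (A : Type u) [Ring A] : Prop :=
  IsSemisimpleModule A (A ⧸ Ideal.jacobson (⊥ : Ideal A))

/-- A ring is semiprimary if it is semilocal and its Jacobson radical is nilpotent. -/
def IsSemiprimaryRing' (A : Type u) [Ring A] : Prop :=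
  IsSemilocalRing A ∧ ∃ n : ℕ, 0 < n ∧ ∀ f : Fin n → A,
    (∀ i, f i ∈ Ideal.jacobson (⊥ : Ideal A)) → (List.ofFn f).prod = 0

theorem wellFounded_span_of_minPrincipalRight {A : Type u} [Ring A] (hA : MinPrincipalRight A) :
    WellFounded fun a b : Aᵐᵒᵖ => span Aᵐᵒᵖ ({a} : Set Aᵐᵒᵖ) < span Aᵐᵒᵖ {b} := by
  rw [wellFounded_iff_isEmpty_descending_chain]
  refine ⟨fun ⟨f, hf⟩ => hA ⟨fun n => (f n).unop, strictAnti_nat_of_succ_lt fun n => ?_⟩⟩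
  have key : ∀ a b : Aᵐᵒᵖ, span Aᵐᵒᵖ {a.unop} ≤ span Aᵐᵒᵖ {b.unop} ↔
      span Aᵐᵒᵖ ({a} : Set Aᵐᵒᵖ) ≤ span Aᵐᵒᵖ {b} := by
    intro a b
    simp only [span_singleton_le_iff_mem, mem_span_singleton]
    refine exists_congr fun r => ?_
    rw [← MulOpposite.op_injective.eq_iff]
    simp [MulOpposite.smul_eq_mul_unop]
  have := hf n
  rw [lt_iff_le_not_ge] at this ⊢
  rwa [key, key]

section LeftModules

variable {R : Type u} [Ring R]

/-- If `R` has the minimum condition on principal left ideals, every nonzero submodule contains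
a simple one: for `0 ≠ x` in it, `R a x` is simple as soon as `R a` is minimal among the
principal left ideals with `a x ≠ 0`. -/
theorem exists_simple_le_of_wellFounded
    (hR : WellFounded fun a b : R => span R ({a} : Set R) < span R {b})
    {M : Type u} [AddCommGroup M] [Module R M] {N : Submodule R M} (hN : N ≠ ⊥) :
    ∃ S ≤ N, IsSimpleModule R S := by
  obtain ⟨x, hxN, hx⟩ := N.ne_bot_iff.mp hN
  obtain ⟨a, ha, hmin⟩ := hR.has_min {a : R | a • x ≠ 0} ⟨1, by simpa using hx⟩
  refine ⟨span R {a • x}, by simpa using N.smul_mem a hxN, ?_⟩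
  rw [isSimpleModule_iff_isAtom, isAtom_iff_le_of_ge]
  refine ⟨by simpa using ha, fun C hC hCle => ?_⟩
  obtain ⟨y, hyC, hy⟩ := C.ne_bot_iff.mp hC
  obtain ⟨b, rfl⟩ := mem_span_singleton.mp (hCle hyC)
  have hba : span R {b * a} ≤ span R {a} := by
    simpa using smul_mem _ b (mem_span_singleton_self a)
  have hab : a ∈ span R {b * a} :=
    (not_lt_iff_le_imp_ge.mp (hmin (b * a) (by simpa [mul_smul] using hy)) hba)
      (mem_span_singleton_self a)
  obtain ⟨c, hc⟩ := mem_span_singleton.mp hab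
  rw [span_singleton_le_iff_mem]
  have : a • x = c • b • a • x := by rw [← mul_smul b, ← mul_smul, ← smul_eq_mul c, hc]
  rw [this]
  exact C.smul_mem c hyC

/-- A simple submodule of a module with zero radical splits off, so a minimal principal
complement of a semisimple submodule of `R ⧸ jacobson R` must vanish. -/
theorem isSemisimpleModule_quotient_jacobson
    (hR : WellFounded fun a b : R => span R ({a} : Set R) < span R {b}) :
    IsSemisimpleModule R (R ⧸ Module.jacobson R R) := by
  set X := R ⧸ Module.jacobson R R
  let q : R →ₗ[R] X := (Module.jacobson R R).mkQ
  obtain ⟨a, ⟨D, hD, hcompl⟩, hmin⟩ := hR.has_min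
    {a : R | ∃ D : Submodule R X, IsSemisimpleModule R D ∧ IsCompl (span R {q a}) D}
    ⟨1, ⊥, .of_sSup_simples_eq_top (Subsingleton.elim _ _), by
      have : span R {q 1} = ⊤ := by
        rw [← Set.image_singleton, span_image, ← Ideal.span, Ideal.span_singleton_one,
          Submodule.map_top, range_mkQ]
      rw [this]; exact isCompl_top_bot⟩
  by_cases hC : span R {q a} = ⊥
  · have : D = ⊤ := by simpa [hC] using hcompl.sup_eq_top
    subst this
    exact IsSemisimpleModule.congr topEquiv.symm
  exfalso
  obtain ⟨I, hIC, hI⟩ := exists_simple_le_of_wellFounded hR hC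
  have hIa := isSimpleModule_iff_isAtom.mp hI
  -- The radical of `X` vanishes, so some maximal submodule avoids `I`.
  obtain ⟨m, hm, hIm⟩ : ∃ m : Submodule R X, IsCoatom m ∧ ¬ I ≤ m := by
    by_contra! h
    have : I ≤ Module.jacobson R X := le_sInf h
    rw [Module.jacobson_quotient_jacobson] at this
    exact hIa.1 (le_bot_iff.mp this)
  have hdisj : I ⊓ m = ⊥ := (hIa.not_le_iff_disjoint.mp hIm).eq_bot
  have hsup : I ⊔ m = ⊤ := hm.2 _ (right_lt_sup.mpr hIm)
  have hCsup : I ⊔ m ⊓ span R {q a} = span R {q a} := by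
    rw [← sup_inf_assoc_of_le m hIC, hsup, top_inf_eq]
  -- The component `c` of `q a` generates the smaller complement `m ⊓ R (q a)` of `I ⊔ D`.
  obtain ⟨i, hi, c, hc, hic⟩ := mem_sup.mp (hCsup.symm ▸ mem_span_singleton_self (q a))
  obtain ⟨r, hr⟩ := mem_span_singleton.mp hc.2
  have hqr : q (r * a) = c := by rw [← smul_eq_mul, map_smul, hr]
  have hgen : span R {q (r * a)} = m ⊓ span R {q a} := by
    rw [hqr]
    refine le_antisymm (by simpa using hc) fun y hy => ?_
    obtain ⟨s, hs⟩ := mem_span_singleton.mp hy.2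
    have hsi : s • i ∈ I ⊓ m := by
      refine ⟨I.smul_mem s hi, ?_⟩
      have : s • i = y - s • c := by rw [← hs, ← hic, smul_add]; abel
      rw [this]
      exact m.sub_mem hy.1 (m.smul_mem s hc.1)
    rw [hdisj, mem_bot] at hsi
    refine mem_span_singleton.mpr ⟨s, ?_⟩
    rw [← hs, ← hic, smul_add, hsi, zero_add]
  have hra : r * a ∈ {a : R | ∃ D : Submodule R X, IsSemisimpleModule R D ∧
      IsCompl (span R {q a}) D} := by
    refine ⟨I ⊔ D, IsSemisimpleModule.sup inferInstance hD, ?_⟩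
    rw [hgen]
    constructor
    · have h1 : Disjoint (m ⊓ span R {q a}) I :=
        disjoint_iff.mpr (by rw [inf_right_comm, inf_comm m, hdisj, bot_inf_eq])
      refine h1.disjoint_sup_right_of_disjoint_sup_left ?_
      rw [sup_comm, hCsup]
      exact hcompl.disjoint
    · rw [codisjoint_iff, ← sup_assoc, sup_comm _ I, hCsup, hcompl.sup_eq_top]
  have hle : span R {r * a} ≤ span R {a} := by
    simpa using smul_mem _ r (mem_span_singleton_self a)
  have hale : span R {a} ≤ span R {r * a} := not_lt_iff_le_imp_ge.mp (hmin _ hra) hle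
  have hqle : span R {q a} ≤ span R {q (r * a)} := by
    simpa only [map_span, Set.image_singleton] using Submodule.map_mono (f := q) hale
  rw [hgen] at hqle
  exact hIm (hIC.trans (hqle.trans inf_le_left))

/-- Up to isomorphism there are only finitely many simple modules: each embeds in the finitely
generated semisimple module `R ⧸ jacobson R`, which has finitely many isotypic components. -/
theorem exists_iso_of_infinite_simples
    (hR : WellFounded fun a b : R => span R ({a} : Set R) < span R {b})
    {ι : Type u} [Infinite ι] (S : ι → Type u) [∀ i, AddCommGroup (S i)] [∀ i, Module R (S i)]
    [∀ i, IsSimpleModule R (S i)] :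
    ∃ t : Set ι, Infinite t ∧ ∀ i j : t, Nonempty (S i ≃ₗ[R] S j) := by
  have := isSemisimpleModule_quotient_jacobson hR
  have h : ∀ i, ∃ m : Submodule R (R ⧸ Module.jacobson R R), Nonempty (m ≃ₗ[R] S i) := by
    intro i
    obtain ⟨I, hI, ⟨e⟩⟩ := isSimpleModule_iff_quot_maximal.mp (inferInstance :
      IsSimpleModule R (S i))
    have hJ : Module.jacobson R R ≤ I := Ring.jacobson_le_of_isMaximal I
    obtain ⟨m, ⟨e'⟩⟩ := IsSemisimpleModule.exists_submodule_linearEquiv_quotient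
      (Submodule.map (Module.jacobson R R).mkQ I)
    exact ⟨m, ⟨e'.trans ((quotientQuotientEquivQuotient _ _ hJ).trans e.symm)⟩⟩
  choose m e using h
  have hm : ∀ i, IsSimpleModule R (m i) := fun i => .congr (e i).some
  obtain ⟨c, hc⟩ := Finite.exists_infinite_fiber fun i =>
    (⟨isotypicComponent R _ (m i), m i, hm i, rfl⟩ :
      isotypicComponents R (R ⧸ Module.jacobson R R))
  refine ⟨_, hc, fun i j => ?_⟩
  have hij : isotypicComponent R (R ⧸ Module.jacobson R R) (m i) =
      isotypicComponent R _ (m j) := congrArg Subtype.val (i.2.trans j.2.symm)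
  have hle : m i ≤ isotypicComponent R (R ⧸ Module.jacobson R R) (m j) :=
    hij ▸ (m i).le_isotypicComponent
  have ⟨f⟩ := isIsotypicOfType_submodule_iff.mp
    (IsIsotypicOfType.isotypicComponent R _ (m j)) _ hle
  exact ⟨(e i).some.symm.trans (f.trans (e j).some)⟩

/-- In a quotient of an `ℵ₀`-distributive module there is no infinite independent family of
isomorphic simple submodules, even when its sum is not the whole quotient. -/
theorem IsAleph0Distributive.false_of_iSupIndep {M Y : Type u} [AddCommGroup M] [Module R M]
    [AddCommGroup Y] [Module R Y] (hM : IsAleph0Distributive R M) (g : M →ₗ[R] Y)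
    (hg : Function.Surjective g) {ι : Type u} [hι : Infinite ι] (T : ι → Submodule R Y)
    (hT : iSupIndep T) (hs : ∀ i, IsSimpleModule R (T i))
    (hiso : ∀ i j, Nonempty (T i ≃ₗ[R] T j)) : False := by
  set L : Submodule R Y := iSup T with hL
  let f : L.comap g →ₗ[R] L := g.restrict fun _ h => h
  have hf : Function.Surjective f := fun ⟨y, hy⟩ => by
    obtain ⟨x, rfl⟩ := hg y
    exact ⟨⟨x, hy⟩, rfl⟩
  let e := f.quotKerEquivOfSurjective hf
  let o : Set.Iic L ≃o Submodule R (L.comap g ⧸ LinearMap.ker f) :=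
    L.mapIic.symm.trans (orderIsoMapComap e.symm)
  let T₀ : ι → Set.Iic L := fun i => ⟨T i, le_iSup T i⟩
  have eq : ∀ i, Nonempty (o (T₀ i) ≃ₗ[R] T i) := fun i =>
    ⟨(e.symm.submoduleMap _).symm.trans (submoduleOfEquivOfLe (le_iSup T i))⟩
  refine hM ⟨_, LinearMap.ker f, ι, hι, fun i => o (T₀ i), ?_, ?_, ?_, ?_⟩
  · exact (iSupIndep.of_coe_Iic_comp (t := T₀) hT).map_orderIso o
  · rw [← o.map_iSup, ← o.map_top]
    congr 1
    apply Subtype.ext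
    rw [Set.Iic.coe_iSup]
    rfl
  · exact fun i => .congr (eq i).some
  · exact fun i j => ⟨(eq i).some.trans ((hiso i j).some.trans (eq j).some.symm)⟩

/-- The socle of every quotient of an `ℵ₀`-distributive module is Artinian. -/
theorem IsAleph0Distributive.isArtinian_socle
    (hR : WellFounded fun a b : R => span R ({a} : Set R) < span R {b})
    {M Y : Type u} [AddCommGroup M] [Module R M] [AddCommGroup Y] [Module R Y]
    (hM : IsAleph0Distributive R M) (g : M →ₗ[R] Y) (hg : Function.Surjective g) :
    IsArtinian R ↥(sSup {S : Submodule R Y | IsSimpleModule R S}) := by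
  set K := sSup {S : Submodule R Y | IsSimpleModule R S} with hK
  have hKs : IsSemisimpleModule R K := by
    rw [hK, sSup_eq_iSup]
    exact isSemisimpleModule_biSup_of_isSemisimpleModule_submodule fun S hS =>
      have : IsSimpleModule R S := hS
      inferInstance
  obtain ⟨s, hs, htop, hsimple⟩ := IsSemisimpleModule.exists_sSupIndep_sSup_simples_eq_top R K
  have hfin : Finite s := by
    by_contra hinf
    rw [not_finite_iff_infinite] at hinf
    have : ∀ i : s, IsSimpleModule R i := fun i => hsimple i i.2
    obtain ⟨t, ht, hiso⟩ := exists_iso_of_infinite_simples hR fun i : s => (i : Submodule R K)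
    have e : ∀ i : Submodule R K, i ≃ₗ[R] i.map K.subtype := fun i =>
      i.equivMapOfInjective _ K.subtype_injective
    refine hM.false_of_iSupIndep g hg (fun i : t => (i.1.1.map K.subtype : Submodule R Y)) ?_ ?_ ?_
    · exact LinearMap.iSupIndep_map _ K.subtype_injective
        (((sSupIndep_iff _).mp hs).comp Subtype.val_injective)
    · exact fun i => .congr (e i.1.1).symm
    · exact fun i j => ⟨(e _).symm.trans ((hiso i j).some.trans (e _))⟩
  have hArt : ∀ i : s, IsArtinian R (i : Submodule R K) := fun i =>
    have := hsimple i i.2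
    inferInstance
  have : IsArtinian R ↥(⨆ i : s, (i : Submodule R K)) :=
    isArtinian_iSup
  rw [← sSup_eq_iSup', htop] at this
  exact isArtinian_of_linearEquiv topEquiv

/-- A module is Artinian if every quotient has an Artinian socle that meets each nonzero
submodule. -/
theorem isArtinian_of_socle {M : Type u} [AddCommGroup M] [Module R M]
    (hart : ∀ N : Submodule R M,
      IsArtinian R ↥(sSup {S : Submodule R (M ⧸ N) | IsSimpleModule R S}))
    (hsoc : ∀ (N : Submodule R M) (L : Submodule R (M ⧸ N)), L ≠ ⊥ →
      ∃ S ≤ L, IsSimpleModule R S) :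
    IsArtinian R M := by
  rw [← monotone_stabilizes_iff_artinian]
  intro f
  -- Work modulo the intersection of the chain.
  let N : Submodule R M := ⨅ n, OrderDual.ofDual (f n)
  have hN : ∀ n, N ≤ OrderDual.ofDual (f n) := iInf_le _
  have := hart N
  set K := sSup {S : Submodule R (M ⧸ N) | IsSimpleModule R S} with hK
  let g : ℕ → Submodule R (M ⧸ N) := fun n => (OrderDual.ofDual (f n)).map N.mkQ
  have hg : ∀ {i j}, i ≤ j → g j ≤ g i := fun h => Submodule.map_mono (f.monotone h)
  obtain ⟨n, hn⟩ := IsArtinian.monotone_stabilizes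
    (⟨fun n => OrderDual.toDual ((g n).comap K.subtype),
      fun _ _ h => comap_mono (hg h)⟩ : ℕ →o (Submodule R K)ᵒᵈ)
  have hall : ∀ x ∈ K, x ∈ g n → ∀ m, x ∈ g m := by
    intro x hxK hx m
    rcases le_total n m with h | h
    · have : (g n).comap K.subtype = (g m).comap K.subtype := hn m h
      have hx' : (⟨x, hxK⟩ : K) ∈ (g n).comap K.subtype := hx
      rw [this] at hx'
      exact hx'
    · exact hg h hx
  have hzero : ∀ x ∈ K, x ∈ g n → x = 0 := by
    intro x hxK hx
    obtain ⟨y, rfl⟩ := N.mkQ_surjective x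
    rw [mkQ_apply, Quotient.mk_eq_zero]
    refine (mem_iInf _).mpr fun m => ?_
    have : y ∈ (g m).comap N.mkQ := hall _ hxK hx m
    rwa [comap_map_mkQ, sup_eq_right.mpr (hN m)] at this
  have hbot : g n = ⊥ := by
    by_contra hne
    obtain ⟨S, hS, hsimple⟩ := hsoc N (g n) hne
    refine (isSimpleModule_iff_isAtom.mp hsimple).1 ((Submodule.eq_bot_iff _).mpr fun x hx => ?_)
    exact hzero x ((le_sSup hsimple : S ≤ K) hx) (hS hx)
  have hle : OrderDual.ofDual (f n) ≤ N := by
    rw [← N.ker_mkQ]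
    exact LinearMap.le_ker_iff_map.mpr hbot
  exact ⟨n, fun m hm => le_antisymm (f.monotone hm) (hle.trans (hN m))⟩

theorem IsArtinian.isAleph0Distributive {M : Type u} [AddCommGroup M] [Module R M]
    [IsArtinian R M] : IsAleph0Distributive R M := by
  rintro ⟨N, P, ι, hι, T, hT, -, hs, -⟩
  have : Finite ι := WellFoundedLT.finite_of_iSupIndep hT fun i =>
    (isSimpleModule_iff_isAtom.mp (hs i)).1
  exact not_finite ι

end LeftModules

theorem stmt0 (A : Type u) [Ring A] (hA : MinPrincipalRight A)
    (M : Type u) [AddCommGroup M] [Module Aᵐᵒᵖ M] :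
    IsAleph0Distributive Aᵐᵒᵖ M ↔ IsArtinian Aᵐᵒᵖ M := by
  have hR := wellFounded_span_of_minPrincipalRight hA
  exact ⟨fun h => isArtinian_of_socle
    (fun N => h.isArtinian_socle hR N.mkQ N.mkQ_surjective)
    (fun _ _ => exists_simple_le_of_wellFounded hR), fun _ => IsArtinian.isAleph0Distributive⟩
end

section
/- Let A be a ring satisfying the minimum condition on principal right ideals (i.e., A is left perfect). Then a left A-module M is ℵ₀-distributive if and only if M is Noetherian. -/
/-!
The minimum condition is used through two classical facts about the Jacobson radical `J` of `A`:
Nakayama's lemma holds for all left modules (`HasRightMinimal.nakayama`), and `A / J` is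
semisimple (`HasRightMinimal.isSemisimpleRing`, which splits off minimal idempotents one at a
time).

Let `N` be a submodule of an `ℵ₀`-distributive module. The quotient `N / JN` is covered by images
of `A / J`, so it is semisimple with finitely many types of simple submodules. By pigeonhole it
must be finitely generated (`exists_infinite_isotypic`), as otherwise infinitely many isomorphic
simple summands would give a forbidden subfactor
(`IsAleph0Distributive.false_of_surjective`). Nakayama's lemma then makes `N` itself finitely
generated. Conversely, a subfactor of a Noetherian module is Noetherian and so carries no infinite
independent family of nonzero submodules.
-/

universe u

open Submodule

/-! ### The minimum condition and Nakayama's lemma -/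

/-- The minimum condition on principal right ideals, in element form: every nonempty set `S` of
ring elements has a member `a` such that `aR = acR` for each right multiple `ac` lying in `S`. -/
def HasRightMinimal (R : Type u) [Ring R] : Prop :=
  ∀ S : Set R, S.Nonempty → ∃ a ∈ S, ∀ c, a * c ∈ S → ∃ d, a * c * d = a

theorem MinPrincipalRight.hasRightMinimal {A : Type u} [Ring A] (hA : MinPrincipalRight A) :
    HasRightMinimal A := by
  rintro S ⟨s, hs⟩
  by_contra! H
  apply hA
  have H' : ∀ a : S, ∃ b : S, ∃ c, a.1 * c = b.1 ∧ ∀ d, b.1 * d ≠ a.1 := fun a =>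
    let ⟨c, hc, h⟩ := H a.1 a.2
    ⟨⟨a.1 * c, hc⟩, c, rfl, h⟩
  choose g c hg hne using H'
  refine ⟨fun n => (g^[n] ⟨s, hs⟩).1, strictAnti_nat_of_succ_lt fun n => ?_⟩
  beta_reduce
  rw [Function.iterate_succ_apply']
  generalize g^[n] ⟨s, hs⟩ = a
  refine lt_of_le_not_ge ?_ fun hle => ?_
  · rw [span_singleton_le_iff_mem, mem_span_singleton]
    exact ⟨MulOpposite.op (c a), hg a⟩
  · rw [span_singleton_le_iff_mem, mem_span_singleton] at hle
    obtain ⟨d, hd⟩ := hle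
    exact hne a d.unop hd

theorem HasRightMinimal.quotient {A : Type u} [Ring A] (hA : HasRightMinimal A) (I : Ideal A)
    [I.IsTwoSided] : HasRightMinimal (A ⧸ I) := by
  rintro S ⟨s, hs⟩
  obtain ⟨s, rfl⟩ := Ideal.Quotient.mk_surjective s
  obtain ⟨a, ha, h⟩ := hA (Ideal.Quotient.mk I ⁻¹' S) ⟨s, hs⟩
  refine ⟨_, ha, fun c hc => ?_⟩
  obtain ⟨c, rfl⟩ := Ideal.Quotient.mk_surjective c
  obtain ⟨d, hd⟩ := h c (by simpa using hc)
  exact ⟨Ideal.Quotient.mk I d, by rw [← map_mul, ← map_mul, hd]⟩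

theorem eq_zero_of_mul_one_sub {A : Type u} [Ring A] {a x : A} (hx : x ∈ Ring.jacobson A)
    (h : a * (1 - x) = 0) : a = 0 := by
  rw [← Ideal.jacobson_bot] at hx
  obtain ⟨z, hz⟩ := Ideal.exists_mul_sub_mem_of_sub_one_mem_jacobson (I := ⊥) (1 - x)
    (by simpa using hx)
  replace hz : z * (1 - x) = 1 := by simpa [sub_eq_zero] using hz
  -- `z = 1 + z * x` is again congruent to `1` modulo the radical, hence has a left inverse too.
  obtain ⟨w, hw⟩ := Ideal.exists_mul_sub_mem_of_sub_one_mem_jacobson (I := ⊥) z (by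
    have : z - 1 = z * x := by
      rw [← hz]; noncomm_ring
    rw [this]
    exact Ideal.mul_mem_left _ _ hx)
  replace hw : w * z = 1 := by simpa [sub_eq_zero] using hw
  have : w = 1 - x := left_inv_eq_right_inv hw hz
  rw [← this] at h hz
  calc a = a * (w * z) := by rw [hw, mul_one]
    _ = 0 := by rw [← mul_assoc, h, zero_mul]

/-- Nakayama's lemma for arbitrary left modules: a member `a` minimal among the elements that do
not annihilate `L` would satisfy `a = a * j * b` with `j` in the radical, forcing `a = 0`. -/
theorem HasRightMinimal.nakayama {A : Type u} [Ring A] (hA : HasRightMinimal A)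
    (L : Type u) [AddCommGroup L] [Module A L]
    (h : Ring.jacobson A • (⊤ : Submodule A L) = ⊤) : Subsingleton L := by
  by_contra hL
  rw [not_subsingleton_iff_nontrivial] at hL
  obtain ⟨x, hx⟩ := exists_ne (0 : L)
  obtain ⟨a, ⟨y, hy⟩, hmin⟩ := hA {a | ∃ x : L, a • x ≠ 0} ⟨1, x, by simpa using hx⟩
  have key : ∃ j ∈ Ring.jacobson A, ∃ z : L, (a * j) • z ≠ 0 := by
    by_contra! H
    have hle : y ∈ Ring.jacobson A • (⊤ : Submodule A L) := by rw [h]; exact mem_top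
    apply hy
    refine Submodule.smul_induction_on (p := fun y => a • y = 0) hle (fun j hj z _ => ?_)
      fun u v hu hv => ?_
    · rw [← mul_smul, H j hj]
    · rw [smul_add, hu, hv, add_zero]
  obtain ⟨j, hj, z, hz⟩ := key
  obtain ⟨d, hd⟩ := hmin j ⟨z, hz⟩
  have : a = 0 := eq_zero_of_mul_one_sub (x := j * d) (Ideal.mul_mem_right _ _ hj)
    (by rw [mul_sub, mul_one, ← mul_assoc, hd, sub_self])
  simp [this] at hy

/-! ### Semisimplicity modulo the radical -/

/-- In a ring with zero Jacobson radical, `x B x = 0` forces `x = 0`. -/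
theorem eq_zero_of_forall_mul_mul {B : Type u} [Ring B] (hJ : Ring.jacobson B = ⊥) {x : B}
    (h : ∀ t, x * t * x = 0) : x = 0 := by
  have : x ∈ Ideal.jacobson (⊥ : Ideal B) := by
    rw [Ideal.mem_jacobson_iff]
    refine fun y => ⟨1 - y * x, ?_⟩
    have e : (1 - y * x) * y * x + (1 - y * x) - 1 = -(y * (x * y * x)) := by noncomm_ring
    rw [e, h]; simp
  rwa [Ideal.jacobson_bot, hJ, mem_bot] at this

/-- Brauer's lemma: if `B` has the minimum condition and zero radical, every nonzero `f B`
contains a nonzero idempotent `e` with `e B` a minimal right ideal. -/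
theorem HasRightMinimal.exists_idempotent {B : Type u} [Ring B] (hB : HasRightMinimal B)
    (hJ : Ring.jacobson B = ⊥) {f : B} (hf : f ≠ 0) :
    ∃ e y : B, e = f * y ∧ e ≠ 0 ∧ e * e = e ∧ ∀ c, e * c ≠ 0 → ∃ d, e * c * d = e := by
  obtain ⟨a, ⟨ha0, u, rfl⟩, hmin⟩ := hB {a | a ≠ 0 ∧ ∃ y, a = f * y} ⟨f, hf, 1, by simp⟩
  replace hmin : ∀ c, f * u * c ≠ 0 → ∃ d, f * u * c * d = f * u := fun c hc =>
    hmin c ⟨hc, u * c, by rw [mul_assoc]⟩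
  set a := f * u with ha
  obtain ⟨b, hb⟩ : ∃ b, a * b * a ≠ 0 := by
    by_contra! H
    exact ha0 (eq_zero_of_forall_mul_mul hJ H)
  -- Left multiplication by `g = a * b` is injective on the minimal right ideal `a B` and maps it
  -- onto itself, so the preimage `e` of `g` is a left identity of `a B`.
  obtain ⟨v, hv⟩ := hmin (b * a) (by rwa [← mul_assoc])
  have inj : ∀ c, a * b * (a * c) = 0 → a * c = 0 := by
    intro c hc
    by_contra hne
    obtain ⟨d, hd⟩ := hmin c hne
    apply hb
    calc a * b * a = a * b * (a * c * d) := by rw [hd]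
      _ = a * b * (a * c) * d := by noncomm_ring
      _ = 0 := by rw [hc, zero_mul]
  have hge : a * b * (a * (v * b)) = a * b := by
    calc a * b * (a * (v * b)) = (a * (b * a) * v) * b := by noncomm_ring
      _ = a * b := by rw [hv]
  have he : a * (v * b) * (a * (v * b)) = a * (v * b) := by
    have h0 := inj (v * b * a * (v * b) - v * b) (by
      calc a * b * (a * (v * b * a * (v * b) - v * b))
          = a * b * (a * (v * b)) * (a * (v * b)) - a * b * (a * (v * b)) := by noncomm_ring
        _ = 0 := by rw [hge, hge, sub_self])
    rw [mul_sub, sub_eq_zero] at h0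
    calc a * (v * b) * (a * (v * b)) = a * (v * b * a * (v * b)) := by noncomm_ring
      _ = _ := h0
  have hne : a * (v * b) ≠ 0 := by
    intro h0
    rw [h0, mul_zero] at hge
    rw [← hge, zero_mul] at hb
    exact hb rfl
  refine ⟨a * (v * b), u * (v * b), by rw [ha, mul_assoc], hne, he, fun c hc => ?_⟩
  obtain ⟨d, hd⟩ := hmin (v * b * c) (by rwa [← mul_assoc])
  refine ⟨d * (v * b), ?_⟩
  calc a * (v * b) * c * (d * (v * b)) = (a * (v * b * c) * d) * (v * b) := by noncomm_ring
    _ = a * (v * b) := by rw [hd]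

/-- If `e B` is a minimal right ideal of a ring with zero radical, then the left ideal `B e` is
simple: any nonzero `x ∈ B e` has a left multiple in `e B e \ {0}`, where right inverses, and hence
two-sided inverses, exist. -/
theorem isSimpleModule_span_of_idempotent {B : Type u} [Ring B] (hJ : Ring.jacobson B = ⊥)
    {e : B} (h0 : e ≠ 0) (he : e * e = e) (hmin : ∀ c, e * c ≠ 0 → ∃ d, e * c * d = e) :
    IsSimpleModule B (span B {e}) := by
  rw [isSimpleModule_iff_isAtom]
  refine ⟨by simpa using h0, fun K hK => ?_⟩
  by_contra hK0
  obtain ⟨x, hxK, hx0⟩ := (Submodule.ne_bot_iff _).1 hK0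
  refine hK.not_ge ?_
  rw [span_singleton_le_iff_mem]
  obtain ⟨r, hr⟩ := mem_span_singleton.1 (hK.le hxK)
  have hxe : x * e = x := by rw [← hr, smul_eq_mul, mul_assoc, he]
  obtain ⟨t, ht⟩ : ∃ t, e * t * x ≠ 0 := by
    by_contra! H
    refine hx0 (eq_zero_of_forall_mul_mul hJ fun t => ?_)
    calc x * t * x = x * e * t * x := by rw [hxe]
      _ = x * (e * t * x) := by noncomm_ring
      _ = 0 := by rw [H, mul_zero]
  -- Elements of `e B e` are written `w` with `e * w = w` and `w * e = w`.
  have inv : ∀ w, e * w = w → w * e = w → w ≠ 0 → ∃ v, e * v = v ∧ v * e = v ∧ w * v = e := by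
    intro w h1 h2 h3
    obtain ⟨d, hd⟩ := hmin w (by rwa [h1])
    rw [h1] at hd
    exact ⟨e * d * e, by rw [← mul_assoc, ← mul_assoc, he], by rw [mul_assoc, he],
      by rw [← mul_assoc, ← mul_assoc, h2, hd, he]⟩
  obtain ⟨v, hv1, hv2, hv⟩ := inv (e * t * x) (by rw [← mul_assoc, ← mul_assoc, he])
    (by rw [mul_assoc, hxe]) ht
  obtain ⟨w, hw1, hw2, hw⟩ := inv v hv1 hv2 (by rintro rfl; exact h0 (by simpa using hv.symm))
  have : e * t * x = w := by
    calc e * t * x = e * t * x * e := by rw [mul_assoc _ x, hxe]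
      _ = e * t * x * (v * w) := by rw [hw]
      _ = e * w := by rw [← mul_assoc, hv]
      _ = w := hw1
  have h : v * (e * t) * x = e := by rw [mul_assoc, this, hw]
  rw [← h]
  exact K.smul_mem _ hxK

/-- Minimum condition plus zero radical imply semisimplicity. An `f` with `f B` minimal subject
to `B (1 - f)` being semisimple must vanish, since a minimal idempotent `e ∈ f B` could be split
off by passing to `(1 - e) f`. -/
theorem HasRightMinimal.isSemisimpleRing {B : Type u} [Ring B] (hB : HasRightMinimal B)
    (hJ : Ring.jacobson B = ⊥) : IsSemisimpleRing B := by
  obtain ⟨f, hf, hmin⟩ := hB {f | IsSemisimpleModule B (span B {1 - f})}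
    ⟨1, by
      rw [Set.mem_ofPred_eq, sub_self, span_zero_singleton]
      rw [← sSup_simples_eq_top_iff_isSemisimpleModule]
      exact Subsingleton.elim _ _⟩
  replace hf : IsSemisimpleModule B (span B {1 - f}) := hf
  have hf0 : f = 0 := by
    by_contra hf0
    obtain ⟨e, y, rfl, h0, he, hemin⟩ := hB.exists_idempotent hJ hf0
    have hs := isSimpleModule_span_of_idempotent hJ h0 he hemin
    set e := f * y with hy
    have e1 : f * (1 - y * f) = (1 - e) * f := by rw [hy]; noncomm_ring
    obtain ⟨d, hd⟩ := hmin (1 - y * f) <| by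
      rw [Set.mem_ofPred_eq, e1]
      have hs' : IsSemisimpleModule B (span B {e * f}) := by
        have := IsSemisimpleModule.range
          ((LinearMap.toSpanSingleton B B f).comp (span B {e}).subtype)
        rw [LinearMap.range_comp, range_subtype, map_span, Set.image_singleton] at this
        exact this
      have hsup := IsSemisimpleModule.sup hf hs'
      refine IsSemisimpleModule.of_injective
        (inclusion (show span B {1 - (1 - e) * f} ≤ span B {1 - f} ⊔ span B {e * f} from ?_))
        (inclusion_injective _)
      rw [span_singleton_le_iff_mem]
      have : 1 - (1 - e) * f = (1 - f) + e * f := by noncomm_ring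
      rw [this]
      exact add_mem_sup (mem_span_singleton_self _) (mem_span_singleton_self _)
    apply h0
    have h1 : e * ((1 - e) * f * d) = 0 := by
      have : e * ((1 - e) * f * d) = (e - e * e) * f * d := by noncomm_ring
      rw [this, he]; simp
    rw [← e1, hd] at h1
    rw [← he]
    nth_rewrite 2 [hy]
    rw [← mul_assoc, h1, zero_mul]
  rw [hf0, sub_zero] at hf
  have : span B {(1 : B)} = ⊤ := Ideal.span_singleton_one
  rw [this] at hf
  exact IsSemisimpleModule.congr (topEquiv (R := B) (M := B)).symm

/-! ### Isotypic families and subfactors -/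

/-- A module covered by images of a fixed finitely generated semisimple module `W` has only
finitely many types of simple submodules, so it is either finitely generated or contains an
infinite independent family of pairwise isomorphic simple submodules. -/
theorem exists_infinite_isotypic {A : Type u} [Ring A] (W Q : Type u) [AddCommGroup W]
    [Module A W] [IsSemisimpleModule A W] [Module.Finite A W] [AddCommGroup Q] [Module A Q]
    (hW : ∀ q : Q, ∃ f : W →ₗ[A] Q, q ∈ LinearMap.range f) (hQ : ¬ Module.Finite A Q) :
    IsSemisimpleModule A Q ∧
    ∃ (ι : Type u) (_ : Infinite ι) (T : ι → Submodule A Q), iSupIndep T ∧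
      (∀ i, IsSimpleModule A (T i)) ∧ ∀ i j, Nonempty (T i ≃ₗ[A] T j) := by
  have hss : IsSemisimpleModule A Q := by
    refine isSemisimpleModule_of_isSemisimpleModule_submodule'
      (p := fun f : W →ₗ[A] Q => LinearMap.range f) (fun f => IsSemisimpleModule.range f) ?_
    rw [eq_top_iff]
    rintro q -
    obtain ⟨f, hf⟩ := hW q
    exact le_iSup (fun f : W →ₗ[A] Q => LinearMap.range f) f hf
  obtain ⟨s, hind, htop, hs⟩ := IsSemisimpleModule.exists_sSupIndep_sSup_simples_eq_top A Q
  have hinf : Infinite s := by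
    by_contra hfin
    rw [not_infinite_iff_finite] at hfin
    apply hQ
    rw [Module.finite_def, ← htop, sSup_eq_iSup']
    refine fg_iSup _ fun m => ?_
    have := hs m.1 m.2
    exact (Module.Finite.iff_fg).1 inferInstance
  have hemb : ∀ m : s, ∃ S : Submodule A W, Nonempty (m.1 ≃ₗ[A] S) := by
    intro m
    have := hs m.1 m.2
    have := IsSimpleModule.nontrivial A m.1
    obtain ⟨q, hq⟩ := exists_ne (0 : m.1)
    obtain ⟨f, w, hw⟩ := hW q.1
    obtain ⟨C, hC⟩ := exists_isCompl m.1
    let π : Q →ₗ[A] m.1 := projectionOnto m.1 C hC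
    have hne : π ∘ₗ f ≠ 0 := by
      intro h0
      apply hq
      have := LinearMap.congr_fun h0 w
      rw [LinearMap.comp_apply, hw] at this
      simpa [π] using this
    obtain ⟨S, e⟩ := LinearMap.linearEquiv_of_ne_zero hne
    exact ⟨S, e⟩
  choose S hS using hemb
  have hSs : ∀ m : s, IsSimpleModule A (S m) := fun m =>
    have := hs m.1 m.2
    IsSimpleModule.congr (hS m).some.symm
  let c : s → isotypicComponents A W := fun m => ⟨isotypicComponent A W (S m), S m, hSs m, rfl⟩
  obtain ⟨k, hk⟩ := Finite.exists_infinite_fiber c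
  refine ⟨hss, c ⁻¹' {k}, hk, fun m => m.1.1, ?_, fun m => hs _ m.1.2, fun m n => ?_⟩
  · exact ((sSupIndep_iff s).1 hind).comp Subtype.val_injective
  · have hmn : isotypicComponent A W (S m.1) = isotypicComponent A W (S n.1) :=
      congrArg Subtype.val (m.2.trans n.2.symm)
    have := hSs m.1
    have := hSs n.1
    obtain ⟨e⟩ := isIsotypicOfType_submodule_iff.mp (.isotypicComponent A W (S n.1)) (S m.1)
      (hmn ▸ (S m.1).le_isotypicComponent)
    exact ⟨(hS m.1).some.trans (e.trans (hS n.1).some.symm)⟩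

/-- A semisimple quotient of a submodule of an `ℵ₀`-distributive module contains no infinite
independent family of pairwise isomorphic simple submodules: their sum would be a direct summand,
hence again a subfactor. -/
theorem IsAleph0Distributive.false_of_surjective {A M : Type u} [Ring A] [AddCommGroup M]
    [Module A M] (h : IsAleph0Distributive A M) (N : Submodule A M) {Q : Type u} [AddCommGroup Q]
    [Module A Q] [IsSemisimpleModule A Q] (g : N →ₗ[A] Q) (hg : Function.Surjective g)
    {ι : Type u} [Infinite ι] (T : ι → Submodule A Q) (hT : iSupIndep T)
    (hs : ∀ i, IsSimpleModule A (T i)) (hiso : ∀ i j, Nonempty (T i ≃ₗ[A] T j)) : False := by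
  obtain ⟨C, hC⟩ := exists_isCompl (⨆ i, T i)
  let π := projectionOnto _ C hC ∘ₗ g
  have hπ : Function.Surjective π :=
    (LinearMap.range_eq_top.1 (range_projectionOnto hC)).comp hg
  let E := π.quotKerEquivOfSurjective hπ
  let T₀ : ι → Submodule A ↥(⨆ i, T i) := fun i => comap (⨆ i, T i).subtype (T i)
  have hind : iSupIndep T₀ := by
    rw [iSupIndep_def]
    intro i
    rw [disjoint_def]
    intro x hx hx'
    have := disjoint_def.1 (iSupIndep_def.1 hT i) x.1 hx
    refine Subtype.ext (this ?_)
    have hle : (⨆ j, ⨆ (_ : j ≠ i), T₀ j) ≤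
        comap (⨆ i, T i).subtype (⨆ j, ⨆ (_ : j ≠ i), T j) :=
      iSup₂_le fun j hj => comap_mono (le_iSup₂_of_le j hj le_rfl)
    exact hle hx'
  have htop : iSup T₀ = ⊤ := by
    apply map_injective_of_injective (subtype_injective (⨆ i, T i))
    rw [Submodule.map_iSup, map_subtype_top]
    refine iSup_congr fun i => ?_
    rw [map_comap_subtype, inf_eq_right]
    exact le_iSup T i
  have e : ∀ i, (T₀ i).map E.symm.toLinearMap ≃ₗ[A] T i := fun i =>
    (E.symm.submoduleMap (T₀ i)).symm.trans (comapSubtypeEquivOfLe (le_iSup T i))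
  refine h ⟨N, LinearMap.ker π, ι, inferInstance, fun i => (T₀ i).map E.symm.toLinearMap,
    ?_, ?_, fun i => ?_, fun i j => ?_⟩
  · exact hind.map_orderIso (orderIsoMapComap E.symm)
  · rw [← Submodule.map_iSup, htop, Submodule.map_top, LinearEquiv.range]
  · have := hs i
    exact IsSimpleModule.congr (e i)
  · exact ⟨(e i).trans ((hiso i j).some.trans (e j).symm)⟩

theorem stmt1 (A : Type u) [Ring A] (hA : MinPrincipalRight A)
    (M : Type u) [AddCommGroup M] [Module A M] :
    IsAleph0Distributive A M ↔ IsNoetherian A M := by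
  constructor
  · intro h
    have hmin := hA.hasRightMinimal
    have hB : IsSemisimpleRing (A ⧸ Ring.jacobson A) :=
      (hmin.quotient _).isSemisimpleRing (Ring.jacobson_quotient_jacobson A)
    have hW : IsSemisimpleModule A (A ⧸ Ring.jacobson A) := by
      let l : (A ⧸ Ring.jacobson A) →ₛₗ[Ideal.Quotient.mk (Ring.jacobson A)]
          (A ⧸ Ring.jacobson A) :=
        { toFun := id
          map_add' := fun _ _ => rfl
          map_smul' := fun _ _ => rfl }
      have : RingHomSurjective (Ideal.Quotient.mk (Ring.jacobson A)) :=
        ⟨Ideal.Quotient.mk_surjective⟩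
      exact (LinearMap.isSemisimpleModule_iff_of_bijective l Function.bijective_id).2 hB
    refine ⟨fun N => ?_⟩
    let Q := N ⧸ (Ring.jacobson A • (⊤ : Submodule A N))
    have hcov : ∀ q : Q, ∃ f : (A ⧸ Ring.jacobson A) →ₗ[A] Q, q ∈ LinearMap.range f := by
      intro q
      obtain ⟨x, rfl⟩ := mkQ_surjective _ q
      refine ⟨liftQ _ (LinearMap.toSpanSingleton A Q (mkQ _ x)) fun j hj => ?_, mkQ _ 1, ?_⟩
      · rw [LinearMap.mem_ker, LinearMap.toSpanSingleton_apply, ← map_smul, mkQ_apply,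
          Quotient.mk_eq_zero]
        exact smul_mem_smul hj mem_top
      · exact (liftQ_apply _ _ _).trans (one_smul A _)
    have hfin : Module.Finite A Q := by
      by_contra hfin
      obtain ⟨_, ι, _, T, hT, hs, hiso⟩ := exists_infinite_isotypic _ Q hcov hfin
      exact h.false_of_surjective N (mkQ _) (mkQ_surjective _) T hT hs hiso
    -- Lift generators of `N / JN` to a finitely generated `F` with `F + JN = N`.
    obtain ⟨t, ht⟩ := hfin.fg_top
    obtain ⟨g, hg⟩ := (mkQ_surjective (Ring.jacobson A • (⊤ : Submodule A N))).hasRightInverse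
    let F : Submodule A N := span A (g '' t)
    have hF : F ⊔ Ring.jacobson A • ⊤ = ⊤ := by
      have : F.map (mkQ (Ring.jacobson A • ⊤)) = ⊤ := by
        rw [map_span, ← Set.image_comp, hg.comp_eq_id, Set.image_id]
        exact ht
      have h2 := congrArg (comap (mkQ (Ring.jacobson A • ⊤))) this
      rwa [comap_map_mkQ, comap_top, sup_comm] at h2
    have hsub : Subsingleton (N ⧸ F) := by
      refine hmin.nakayama _ ?_
      have h2 := congrArg (Submodule.map (mkQ F)) hF
      rwa [Submodule.map_sup, mkQ_map_self, bot_sup_eq, map_smul'', Submodule.map_top,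
        range_mkQ] at h2
    rw [← Submodule.fg_top, ← Submodule.Quotient.subsingleton_iff.1 hsub]
    exact fg_span (t.finite_toSet.image g)
  · rintro h ⟨N, P, ι, _, T, hT, -, hs, -⟩
    have := WellFoundedGT.finite_of_iSupIndep hT fun i =>
      ((isSimpleModule_iff_isAtom).1 (hs i)).1
    exact not_finite ι
end

section
/- Let A be a ring satisfying both the minimum condition on principal right ideals and the minimum condition on principal left ideals. Then every ℵ₀-distributive right A-module is both Noetherian and Artinian. -/
/-!
Write `J` for the Jacobson radical of `Aᵐᵒᵖ`. The two minimum conditions say that `A` is perfect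
on both sides, and they enter as follows.

* The condition on principal right ideals gives the descending chain condition on cyclic submodules
  of every right module (`no_chain_cyclic`). So every nonzero right module has a simple submodule,
  and `A ⧸ J` is semisimple (`isSemisimple_of_cyclic`).
* The condition on principal left ideals gives Nakayama's lemma for all right modules
  (`subsingleton_of_jacobson_smul_top`).

Let `N` be a submodule of an `ℵ₀`-distributive module `M`. Then `N ⧸ NJ` is semisimple, and as
there are only finitely many simple modules up to isomorphism, `ℵ₀`-distributivity makes it
finitely generated (`semisimple_fg`). Nakayama's lemma lifts finite generation to `N`, so `M` is
Noetherian. A Noetherian module all of whose nonzero quotients have simple submodules is Artinian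
(`isArtinian_of_semiartinian`).
-/

universe u

open Submodule

/-! ### Minimum conditions on cyclic submodules -/

/-- Descending chain condition turned into minimum condition, for the values of an
arbitrary map `f`: `f` will be `x ↦ span {x}`, so only cyclic submodules are concerned. -/
theorem exists_minimal_of_no_chain {α β : Type*} [Preorder β] (f : α → β)
    (h : ¬ ∃ a : ℕ → α, StrictAnti fun n => f (a n)) (P : α → Prop) (hP : ∃ x, P x) :
    ∃ x, P x ∧ ∀ y, P y → ¬ f y < f x := by
  by_contra! hc
  obtain ⟨x, hx⟩ := hP
  choose! g hg hlt using hc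
  have hs : ∀ n, P (g^[n] x) := fun n => by
    induction n with
    | zero => exact hx
    | succ n ih => rw [Function.iterate_succ_apply']; exact hg _ ih
  refine h ⟨fun n => g^[n] x, strictAnti_nat_of_succ_lt fun n => ?_⟩
  beta_reduce
  rw [Function.iterate_succ_apply']
  exact hlt _ (hs n)

/-- The minimum condition on principal right ideals passes to cyclic submodules of every
right module: if `xₙ₊₁ = xₙ bₙ`, the chain `xₙ A` is the image of the chain of principal right
ideals `b₀ ⋯ bₙ₋₁ A` under `c ↦ x₀ c`. -/
theorem no_chain_cyclic (A : Type u) [Ring A] (h1 : MinPrincipalRight A)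
    (M : Type u) [AddCommGroup M] [Module Aᵐᵒᵖ M] :
    ¬ ∃ x : ℕ → M, StrictAnti fun n => span Aᵐᵒᵖ ({x n} : Set M) := by
  rintro ⟨x, hx⟩
  have hstep : ∀ n, ∃ b : A, MulOpposite.op b • x n = x (n + 1) := fun n => by
    obtain ⟨b, hb⟩ := mem_span_singleton.mp
      ((hx (Nat.lt_succ_self n)).le (mem_span_singleton_self (x (n + 1))))
    exact ⟨b.unop, hb⟩
  choose b hb using hstep
  -- `c n = b₀ ⋯ bₙ₋₁`
  let c : ℕ → A := fun n => Nat.rec 1 (fun k p => p * b k) n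
  have hc : ∀ n, c (n + 1) = c n * b n := fun n => rfl
  have hxc : ∀ n, x n = MulOpposite.op (c n) • x 0 := fun n => by
    induction n with
    | zero => simp [c]
    | succ n ih => rw [← hb, hc, MulOpposite.op_mul, mul_smul, ← ih]
  refine h1 ⟨c, strictAnti_nat_of_succ_lt fun n => lt_of_le_not_ge ?_ fun hle => ?_⟩
  · rw [span_singleton_le_iff_mem, mem_span_singleton]
    exact ⟨MulOpposite.op (b n), rfl⟩
  · obtain ⟨d, hd⟩ := mem_span_singleton.mp (hle (mem_span_singleton_self (c n)))
    refine (hx (Nat.lt_succ_self n)).not_ge ?_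
    rw [span_singleton_le_iff_mem, mem_span_singleton]
    refine ⟨d, ?_⟩
    rw [hxc, hxc n, ← mul_smul, ← hd]
    rfl

section CyclicMin

variable {R : Type u} [Ring R]

/-- A minimal nonzero cyclic submodule is simple. -/
theorem exists_simple_of_no_chain {M : Type u} [AddCommGroup M] [Module R M]
    (h : ¬ ∃ x : ℕ → M, StrictAnti fun n => span R ({x n} : Set M))
    (N : Submodule R M) (hN : N ≠ ⊥) : ∃ S ≤ N, IsSimpleModule R S := by
  obtain ⟨y, hyN, hy⟩ := N.exists_mem_ne_zero_of_ne_bot hN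
  obtain ⟨x, ⟨hxN, hx⟩, hmin⟩ := exists_minimal_of_no_chain (fun x => span R ({x} : Set M)) h
    (fun x => x ∈ N ∧ x ≠ 0) ⟨y, hyN, hy⟩
  have hle : span R {x} ≤ N := by rwa [span_singleton_le_iff_mem]
  refine ⟨span R {x}, hle, ?_⟩
  rw [isSimpleModule_iff_isAtom]
  refine ⟨by simpa using hx, fun L hL => ?_⟩
  by_contra hne
  obtain ⟨z, hzL, hz⟩ := L.exists_mem_ne_zero_of_ne_bot hne
  exact hmin z ⟨hle (hL.le hzL), hz⟩
    (lt_of_le_of_lt (by rwa [span_singleton_le_iff_mem]) hL)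

/-- A cyclic module with zero radical and the descending chain condition on cyclic submodules
is semisimple. As direct summands of a cyclic module are cyclic, there is a minimal direct summand
with a semisimple complement. If it is nonzero it contains a simple submodule `S`; some maximal
submodule misses `S` and so complements it, and `S` can be moved to the other side, contradicting
minimality. -/
theorem isSemisimple_of_cyclic {M : Type u} [AddCommGroup M] [Module R M]
    (h : ¬ ∃ x : ℕ → M, StrictAnti fun n => span R ({x n} : Set M))
    (m : M) (hm : span R {m} = ⊤) (hJ : Module.jacobson R M = ⊥) :
    IsSemisimpleModule R M := by
  have hcyc : ∀ X Y : Submodule R M, IsCompl X Y → ∃ x, span R {x} = X := by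
    intro X Y hXY
    refine ⟨X.projectionOnto Y hXY m, ?_⟩
    have := congrArg (Submodule.map (X.subtype ∘ₗ X.projectionOnto Y hXY)) hm
    rw [map_span, Set.image_singleton, Submodule.map_top, LinearMap.range_comp,
      Submodule.range_projectionOnto] at this
    simpa using this
  obtain ⟨x, ⟨Y, hxY, hY⟩, hmin⟩ :=
    exists_minimal_of_no_chain (fun x => span R ({x} : Set M)) h
      (fun x => ∃ Y : Submodule R M, IsCompl (span R {x}) Y ∧ IsSemisimpleModule R Y)
      ⟨m, ⊥, by rw [hm]; exact isCompl_top_bot,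
        .of_sSup_simples_eq_top (Subsingleton.elim _ _)⟩
  by_cases hx : span R {x} = ⊥
  · have : Y = ⊤ := by simpa [hx] using hxY.sup_eq_top
    subst this
    exact IsSemisimpleModule.congr topEquiv.symm
  exfalso
  obtain ⟨S, hS, hSs⟩ := exists_simple_of_no_chain h _ hx
  have hat := isSimpleModule_iff_isAtom.mp hSs
  obtain ⟨C, hC, hSC⟩ : ∃ C : Submodule R M, IsCoatom C ∧ ¬ S ≤ C := by
    by_contra! hc
    exact hat.1 (le_bot_iff.mp (hJ ▸ le_sInf fun C hC => hc C hC))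
  have hcompl : IsCompl S C := by
    refine ⟨?_, ?_⟩
    · exact hat.not_le_iff_disjoint.mp hSC
    · exact codisjoint_comm.mp (hC.not_le_iff_codisjoint.mp hSC)
  have hnew : IsCompl (span R {x} ⊓ C) (Y ⊔ S) := by
    -- Modular law, using `S ≤ span {x}`.
    have h1 : S ⊔ span R {x} ⊓ C = span R {x} := by
      rw [inf_comm, ← sup_inf_assoc_of_le C hS, hcompl.sup_eq_top, top_inf_eq]
    refine IsCompl.of_eq ?_ ?_
    · rw [sup_comm]
      refine (Disjoint.disjoint_sup_right_of_disjoint_sup_left ?_ ?_).eq_bot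
      · exact (hcompl.disjoint.mono_right inf_le_right).symm
      · rw [sup_comm, h1]; exact hxY.disjoint
    · rw [sup_comm, sup_assoc, h1, sup_comm, hxY.sup_eq_top]
  obtain ⟨z, hz⟩ := hcyc _ _ hnew
  refine hmin z ⟨Y ⊔ S, hz ▸ hnew, IsSemisimpleModule.sup hY inferInstance⟩ ?_
  rw [hz]
  refine lt_of_le_of_ne inf_le_left fun he => hSC (hS.trans (inf_eq_left.mp he))

theorem semisimple_quotient_jacobson
    (h : ¬ ∃ x : ℕ → R ⧸ Ring.jacobson R,
      StrictAnti fun n => span R ({x n} : Set (R ⧸ Ring.jacobson R))) :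
    IsSemisimpleModule R (R ⧸ Ring.jacobson R) := by
  refine isSemisimple_of_cyclic h ((Ring.jacobson R).mkQ 1) ?_
    (Module.jacobson_quotient_jacobson _ _)
  have h1 : span R {(1 : R)} = ⊤ := Ideal.span_singleton_one
  rw [← Set.image_singleton, ← map_span, h1, Submodule.map_top, range_mkQ]

end CyclicMin

/-! ### Nakayama's lemma without finiteness -/

/-- The radical is defined through left ideals, so that `1 - t` is left invertible for `t` in
it is immediate; cancelling on the right needs that `1 - t` is a unit. -/
theorem eq_zero_of_mul_jacobson {R : Type*} [Ring R] {x t : R} (ht : t ∈ Ring.jacobson R)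
    (h : x * t = x) : x = 0 := by
  have hinv : ∀ t ∈ Ring.jacobson R, ∃ z : R, z * (1 + t) = 1 := fun t ht => by
    rw [← Ideal.jacobson_bot, Ideal.mem_jacobson_iff] at ht
    obtain ⟨z, hz⟩ := ht 1
    refine ⟨z, ?_⟩
    rw [Ideal.mem_bot] at hz
    rw [← sub_eq_zero, ← hz]; noncomm_ring
  obtain ⟨z, hz⟩ := hinv (-t) (neg_mem ht)
  obtain ⟨w, hw⟩ := hinv (z * t) (Ideal.mul_mem_left _ _ ht)
  -- `z = 1 + z t` is itself of the form `1 + j`, so it has a left inverse `w`, forced to be `1 - t`.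
  have hz' : 1 + z * t = z := by
    calc 1 + z * t = z * (1 + -t) + z * t := by rw [hz]
      _ = z := by noncomm_ring
  rw [hz'] at hw
  have hwt : w = 1 + -t := by
    calc w = w * (z * (1 + -t)) := by rw [hz, mul_one]
      _ = 1 + -t := by rw [← mul_assoc, hw, one_mul]
  calc x = x * (w * z) := by rw [hw, mul_one]
    _ = (x - x * t) * z := by rw [hwt]; noncomm_ring
    _ = 0 := by rw [h, sub_self, zero_mul]

/-- Nakayama's lemma for arbitrary, not necessarily finitely generated, right modules over a
ring with minimum condition on principal left ideals: `MJ = M` forces `M = 0`. Otherwise choose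
`Aa` minimal among principal left ideals with `Ma ≠ 0`. Since `Ma = MJa`, some `b ∈ J` has
`Mba ≠ 0`, so `Aba = Aa`, i.e. `a = cba`, and hence `a = 0`. -/
theorem subsingleton_of_jacobson_smul_top (A : Type u) [Ring A] (h2 : MinPrincipalLeft A)
    (M : Type u) [AddCommGroup M] [Module Aᵐᵒᵖ M]
    (hM : Ring.jacobson Aᵐᵒᵖ • (⊤ : Submodule Aᵐᵒᵖ M) = ⊤) : Subsingleton M := by
  by_contra hns
  rw [not_subsingleton_iff_nontrivial] at hns
  obtain ⟨m₀, hm₀⟩ := exists_ne (0 : M)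
  obtain ⟨a, ⟨m, hm⟩, hmin⟩ := exists_minimal_of_no_chain (fun a => span A ({a} : Set A)) h2
    (fun a => ∃ m : M, MulOpposite.op a • m ≠ 0) ⟨1, m₀, by simpa using hm₀⟩
  obtain ⟨b, hbJ, n, hn⟩ : ∃ b ∈ Ring.jacobson Aᵐᵒᵖ, ∃ n : M,
      MulOpposite.op a • b • n ≠ 0 := by
    by_contra! hc
    have hmem : m ∈ Ring.jacobson Aᵐᵒᵖ • (⊤ : Submodule Aᵐᵒᵖ M) := by rw [hM]; exact mem_top
    suffices h0 : MulOpposite.op a • m = 0 from hm h0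
    clear hm
    induction hmem using Submodule.smul_induction_on' with
    | smul r hr n _ => exact hc r hr n
    | add x _ y _ hx hy => rw [smul_add, hx, hy, add_zero]
  have hle : span A {b.unop * a} ≤ span A {a} := by
    rw [span_singleton_le_iff_mem, mem_span_singleton]
    exact ⟨b.unop, rfl⟩
  have hge : span A {a} ≤ span A {b.unop * a} := by
    by_contra hlt
    exact hmin _ ⟨n, by simpa [mul_smul] using hn⟩ (lt_of_le_not_ge hle hlt)
  rw [span_singleton_le_iff_mem, mem_span_singleton] at hge
  obtain ⟨c, hc⟩ := hge
  have ha : MulOpposite.op a = 0 := by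
    refine eq_zero_of_mul_jacobson (t := b * MulOpposite.op c) (Ideal.mul_mem_right _ _ hbJ) ?_
    conv_rhs => rw [← hc]
    simp [mul_assoc]
  exact hm (by rw [ha, zero_smul])

/-! ### Semisimple modules and subfactors -/

/-- If `R ⧸ J` is semisimple there are only finitely many simple modules up to isomorphism, one
for each isotypic component of `R ⧸ J`. So an infinite independent family of simple submodules has
an infinite subfamily of pairwise isomorphic ones. -/
theorem semisimple_fg {R : Type u} [Ring R] (hss : IsSemisimpleModule R (R ⧸ Ring.jacobson R))
    (Q : Type u) [AddCommGroup Q] [Module R Q] [IsSemisimpleModule R Q]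
    (hQ : ∀ (ι : Type u) (_ : Infinite ι) (T : ι → Submodule R Q), iSupIndep T →
      (∀ i, IsSimpleModule R (T i)) → ¬ ∀ i j, Nonempty (T i ≃ₗ[R] T j)) :
    Module.Finite R Q := by
  obtain ⟨s, hind, htop, hs⟩ := IsSemisimpleModule.exists_sSupIndep_sSup_simples_eq_top R Q
  by_cases hfin : s.Finite
  · refine ⟨?_⟩
    have := hfin.to_subtype
    rw [← htop, sSup_eq_iSup']
    refine fg_iSup _ fun i => ?_
    have := hs _ i.2
    exact Module.Finite.iff_fg.mp inferInstance
  have hinf : Infinite s := Set.infinite_coe_iff.mpr hfin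
  exfalso
  have hsub : ∀ S : s, ∃ S' : Submodule R (R ⧸ Ring.jacobson R), Nonempty (S.1 ≃ₗ[R] S') := by
    intro S
    have := hs _ S.2
    obtain ⟨I, hI, ⟨f⟩⟩ := isSimpleModule_iff_quot_maximal.mp this
    have hle := Ring.jacobson_le_of_isMaximal I
    -- The simple module `R ⧸ I` is a quotient, hence also a submodule, of the semisimple `R ⧸ J`.
    obtain ⟨K, ⟨g⟩⟩ := IsSemisimpleModule.exists_submodule_linearEquiv_quotient (R := R)
      (M := R ⧸ Ring.jacobson R)
      (Submodule.map (Ring.jacobson R).mkQ I)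
    exact ⟨K, ⟨f.trans ((quotientQuotientEquivQuotient _ _ hle).symm.trans g.symm)⟩⟩
  choose S' e using hsub
  have hS' : ∀ i, IsSimpleModule R (S' i) := fun i => by
    have := hs _ i.2
    exact IsSimpleModule.congr (e i).some.symm
  let F : s → isotypicComponents R (R ⧸ Ring.jacobson R) := fun i =>
    ⟨isotypicComponent R _ (S' i), S' i, hS' i, rfl⟩
  obtain ⟨y, hy⟩ := Finite.exists_infinite_fiber F
  refine hQ (F ⁻¹' {y}) hy (fun i => i.1.1) ?_ (fun i => hs _ i.1.2) ?_
  · exact (sSupIndep_iff _ |>.mp hind).comp Subtype.val_injective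
  · intro i j
    have hij : isotypicComponent R _ (S' i.1) = isotypicComponent R _ (S' j.1) :=
      congrArg Subtype.val (i.2.trans j.2.symm : F i.1 = F j.1)
    have h1 := isIsotypicOfType_submodule_iff.mp
      (IsIsotypicOfType.isotypicComponent R (R ⧸ Ring.jacobson R) (S' j.1)) (S' i.1)
      (hij ▸ Submodule.le_isotypicComponent _)
    exact ⟨(e i.1).some.trans (h1.some.trans (e j.1).some.symm)⟩

/-- `N ⧸ JN` is a sum of cyclic modules, each a quotient of `R ⧸ J`. -/
theorem semisimple_smul_quotient {R : Type u} [Ring R]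
    (hss : IsSemisimpleModule R (R ⧸ Ring.jacobson R))
    (N : Type u) [AddCommGroup N] [Module R N] :
    IsSemisimpleModule R (N ⧸ (Ring.jacobson R • (⊤ : Submodule R N))) := by
  set P := Ring.jacobson R • (⊤ : Submodule R N)
  have h : ∀ n : N, IsSemisimpleModule R (span R {P.mkQ n}) := fun n => by
    rw [LinearMap.span_singleton_eq_range, ← (Ring.jacobson R).range_liftQ
      (LinearMap.toSpanSingleton R _ (P.mkQ n)) ?_]
    · exact IsSemisimpleModule.range _
    · intro r hr
      rw [LinearMap.mem_ker, LinearMap.toSpanSingleton_apply, ← map_smul, mkQ_apply,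
        Quotient.mk_eq_zero]
      exact smul_mem_smul hr mem_top
  refine isSemisimpleModule_of_isSemisimpleModule_submodule' h ?_
  rw [eq_top_iff]
  rintro x -
  obtain ⟨n, rfl⟩ := P.mkQ_surjective x
  exact le_iSup (fun n => span R {P.mkQ n}) n (mem_span_singleton_self _)

/-- The spanning requirement in the definition of `ℵ₀`-distributivity is harmless: a family in
a subfactor spans a submodule of it, which is again a subfactor. -/
theorem IsAleph0Distributive.not_family {R M : Type u} [Ring R] [AddCommGroup M] [Module R M]
    (hM : IsAleph0Distributive R M) (N : Submodule R M) (P : Submodule R N)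
    (ι : Type u) (hι : Infinite ι) (T : ι → Submodule R (N ⧸ P)) (hT : iSupIndep T)
    (hs : ∀ i, IsSimpleModule R (T i)) : ¬ ∀ i j, Nonempty (T i ≃ₗ[R] T j) := by
  intro hij
  let K := iSup T
  let L : Submodule R N := K.comap P.mkQ
  let N' : Submodule R M := L.map N.subtype
  let e : L ≃ₗ[R] N' := L.equivMapOfInjective N.subtype N.injective_subtype
  let g : L →ₗ[R] K := P.mkQ.restrict (p := L) (q := K) fun _ hx => hx
  have hg : Function.Surjective g := by
    rintro ⟨x, hx⟩
    obtain ⟨n, rfl⟩ := P.mkQ_surjective x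
    exact ⟨⟨n, hx⟩, rfl⟩
  let f : N' →ₗ[R] K := g ∘ₗ e.symm.toLinearMap
  have hf : Function.Surjective f := hg.comp e.symm.surjective
  let E : (N' ⧸ LinearMap.ker f) ≃ₗ[R] K := f.quotKerEquivOfSurjective hf
  let T₁ : ι → Submodule R K := fun i => (T i).comap K.subtype
  have hT₁ : ∀ i, (T₁ i).map K.subtype = T i := fun i => by
    rw [map_comap_subtype]; exact inf_eq_right.mpr (le_iSup T i)
  let o := (orderIsoMapComap E.symm)
  let T₂ : ι → Submodule R (N' ⧸ LinearMap.ker f) := fun i => o (T₁ i)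
  have e₂ : ∀ i, Nonempty (T₂ i ≃ₗ[R] T i) := fun i =>
    ⟨(E.symm.submoduleMap (T₁ i)).symm.trans (((T₁ i).equivMapOfInjective K.subtype
      K.injective_subtype).trans (LinearEquiv.ofEq _ _ (hT₁ i)))⟩
  refine hM ⟨N', LinearMap.ker f, ι, hι, T₂, ?_, ?_, fun i => ?_, fun i j => ?_⟩
  · refine iSupIndep.map_orderIso o ?_
    intro i
    rw [disjoint_iff, eq_bot_iff, ← map_le_map_iff_of_injective K.injective_subtype]
    refine (map_inf_le _).trans ?_
    rw [Submodule.map_bot]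
    simp_rw [Submodule.map_iSup, hT₁]
    exact (hT i).le_bot
  · rw [← o.map_top, ← o.map_iSup]
    congr 1
    apply map_injective_of_injective K.injective_subtype
    rw [Submodule.map_iSup, Submodule.map_top, range_subtype]
    simp_rw [hT₁]
    rfl
  · have := hs i
    exact IsSimpleModule.congr (e₂ i).some
  · exact ⟨(e₂ i).some.trans ((hij i j).some.trans (e₂ j).some.symm)⟩

/-! ### Chain conditions on the module -/

/-- In a Noetherian module take a maximal Artinian submodule `L`. If `L` is proper, extending it
by a simple submodule of `M ⧸ L` gives a larger Artinian submodule. -/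
theorem isArtinian_of_semiartinian {R M : Type u} [Ring R] [AddCommGroup M] [Module R M]
    [IsNoetherian R M]
    (h : ∀ N : Submodule R M, N ≠ ⊤ → ∃ S : Submodule R (M ⧸ N), IsSimpleModule R S) :
    IsArtinian R M := by
  obtain ⟨L, hL, hmax⟩ := wellFounded_gt.has_min
    {L : Submodule R M | IsArtinian R L} ⟨⊥, (inferInstance : IsArtinian R (⊥ : Submodule R M))⟩
  by_cases htop : L = ⊤
  · subst htop
    have : IsArtinian R (⊤ : Submodule R M) := hL
    exact isArtinian_of_linearEquiv topEquiv
  exfalso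
  obtain ⟨S, hS⟩ := h L htop
  have hLA : IsArtinian R L := hL
  have hle : L ≤ S.comap L.mkQ := fun x hx => by
    have : L.mkQ x = 0 := by simpa using hx
    rw [mem_comap, this]; exact S.zero_mem
  have hart : IsArtinian R (S.comap L.mkQ) := by
    refine isArtinian_of_range_eq_ker (inclusion hle)
      (L.mkQ.restrict (p := S.comap L.mkQ) (q := S) fun _ hx => hx) ?_
    ext x
    rw [range_inclusion, mem_comap, LinearMap.mem_ker, Subtype.ext_iff]
    simp
  refine hmax _ hart (lt_of_le_of_ne hle fun he => ?_)
  refine (isSimpleModule_iff_isAtom.mp hS).1 (eq_bot_iff.mpr ?_)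
  rintro x hx
  obtain ⟨m, rfl⟩ := L.mkQ_surjective x
  have : m ∈ L := he ▸ hx
  simpa using this

theorem stmt4 (A : Type u) [Ring A] (h1 : MinPrincipalRight A) (h2 : MinPrincipalLeft A)
    (M : Type u) [AddCommGroup M] [Module Aᵐᵒᵖ M] (hM : IsAleph0Distributive Aᵐᵒᵖ M) :
    IsNoetherian Aᵐᵒᵖ M ∧ IsArtinian Aᵐᵒᵖ M := by
  have hss : IsSemisimpleModule Aᵐᵒᵖ (Aᵐᵒᵖ ⧸ Ring.jacobson Aᵐᵒᵖ) :=
    semisimple_quotient_jacobson (no_chain_cyclic A h1 _)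
  have hN : IsNoetherian Aᵐᵒᵖ M := by
    refine ⟨fun N => ?_⟩
    set P := Ring.jacobson Aᵐᵒᵖ • (⊤ : Submodule Aᵐᵒᵖ N) with hP
    have := semisimple_smul_quotient hss N
    have hfin : Module.Finite Aᵐᵒᵖ (N ⧸ P) := semisimple_fg hss _ (hM.not_family N P)
    obtain ⟨s, hs, hspan⟩ := fg_def.mp hfin.fg_top
    -- `K` is generated by lifts of finitely many generators of `N ⧸ NJ`, so `K + NJ = N`.
    let K : Submodule Aᵐᵒᵖ N := span Aᵐᵒᵖ (Function.surjInv P.mkQ_surjective '' s)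
    have hKmap : K.map P.mkQ = ⊤ := by
      rw [map_span, ← Set.image_comp, ← hspan]
      congr 1
      exact (Set.image_congr fun x _ => Function.surjInv_eq P.mkQ_surjective x).trans
        (Set.image_id s)
    have hKP : P ⊔ K = ⊤ := by rw [← comap_map_mkQ, hKmap, comap_top]
    have hsub : Subsingleton (N ⧸ K) := by
      refine subsingleton_of_jacobson_smul_top A h2 _ ?_
      have hK0 : K.map K.mkQ = ⊥ := mkQ_map_self K
      calc Ring.jacobson Aᵐᵒᵖ • (⊤ : Submodule Aᵐᵒᵖ (N ⧸ K))
          = P.map K.mkQ := by rw [hP, map_smul'', Submodule.map_top, range_mkQ]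
        _ = (P ⊔ K).map K.mkQ := by rw [Submodule.map_sup, hK0, sup_bot_eq]
        _ = ⊤ := by rw [hKP, Submodule.map_top, range_mkQ]
    have hKtop : K = ⊤ := Submodule.Quotient.subsingleton_iff.mp hsub
    rw [← Module.Finite.iff_fg]
    exact ⟨hKtop ▸ fg_span (hs.image _)⟩
  refine ⟨hN, isArtinian_of_semiartinian fun N hNt => ?_⟩
  have : Nontrivial (M ⧸ N) := Quotient.nontrivial_iff.mpr hNt
  obtain ⟨S, -, hS⟩ := exists_simple_of_no_chain (no_chain_cyclic A h1 (M ⧸ N)) ⊤ top_ne_bot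
  exact ⟨S, hS⟩
end

section
/- For a ring A, every right A-module is a direct sum of distributive modules if and only if A is a ring of finite representation type and every indecomposable right A-module is distributive. -/
/-!
The right modules over `A` are treated as left modules over `R = Aᵐᵒᵖ`.

Suppose every module is a direct sum of distributive modules (`SumDist R`). An indecomposable
module is then one of its own distributive summands. Three things have to be shown.

* `R` is left Artinian. A decomposition of the product `R ^ ℕ` excludes strictly descending chains
  of principal right ideals, by a gliding hump argument (`chase_contra`) in which the contradiction
  comes from the fact that a distributive module has no subquotient `S × S` with `S` simple. The
  minimum condition makes `R ⧸ J` semisimple (`isSemisimpleRing_of_minCond`) and gives Nakayama's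
  lemma for all left modules, so that distributive modules are cyclic, hence Noetherian
  (`SumDist.cyclic`). Thus `R` is Noetherian, `J` is nilpotent, and `R` is Artinian.
* The indecomposable modules have length at most `c`, the length of `R`, as they are cyclic. By the
  Harada-Sai lemma (`NC.harada_sai`) a composite of `2 ^ c - 1` non-isomorphisms between them is
  zero.
* Any family of maps into a Noetherian module is generated by finitely many members
  (`SumDist.finite_generation`); this applies the hypothesis to the kernel of the combined map.
  Every indecomposable has a nonzero map to `R ⧸ J`, and factoring it repeatedly through the finite
  sets so obtained, the Harada-Sai lemma leaves only finitely many isomorphism classes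
  (`SumDist.finite_reps`).

Conversely, let `R` be left Artinian with indecomposables of bounded length. By the Harada-Sai
lemma every nonzero module contains a finitely generated indecomposable pure submodule
(`exists_pure_embedding`). Applied to quotients by pure submodules, this enlarges any independent
family of indecomposable submodules with proper pure sum. Since directed unions of pure submodules
are pure, Zorn's lemma writes every module as a direct sum of finitely generated indecomposable
modules (`exists_direct_sum`), and these are distributive by hypothesis.
-/

universe u

open Submodule

namespace DistSum

/-! ### Distributive modules and direct sum decompositions -/

section Distributive

variable {R D M : Type u} [Ring R] [AddCommGroup D] [Module R D] [AddCommGroup M] [Module R M]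

/-- The elementwise form of distributivity: distribute `x + y` over `R x ⊔ R y`. -/
theorem dist_crit (h : IsDistributiveModule R D) (x y : D) :
    ∃ a : R, a • x ∈ span R {y} ∧ (1 - a) • y ∈ span R {x} := by
  have h1 : x + y ∈ span R {x + y} ⊓ (span R {x} ⊔ span R {y}) :=
    ⟨mem_span_singleton_self _, Submodule.add_mem_sup (mem_span_singleton_self _)
      (mem_span_singleton_self _)⟩
  rw [h, mem_sup] at h1
  obtain ⟨p, ⟨hp1, hp2⟩, q, ⟨hq1, hq2⟩, hpq⟩ := h1
  obtain ⟨b, rfl⟩ := mem_span_singleton.1 hp1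
  have hq : q = (1 - b) • (x + y) := by
    rw [sub_smul, one_smul, eq_sub_iff_add_eq', hpq]
  subst hq
  refine ⟨1 - b, ?_, ?_⟩
  · have := sub_mem hq2 (smul_mem _ (1 - b) (mem_span_singleton_self y))
    rwa [smul_add, add_sub_cancel_right] at this
  · have := sub_mem hp2 (smul_mem _ b (mem_span_singleton_self x))
    rw [smul_add, add_sub_cancel_left] at this
    simpa using this

theorem dist_of_injective (h : IsDistributiveModule R D) (f : M →ₗ[R] D)
    (hf : Function.Injective f) : IsDistributiveModule R M := by
  intro X Y Z
  apply Submodule.map_injective_of_injective hf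
  simp only [Submodule.map_inf f hf, Submodule.map_sup, h _ _ _]

theorem dist_of_surjective (h : IsDistributiveModule R D) (f : D →ₗ[R] M)
    (hf : Function.Surjective f) : IsDistributiveModule R M := by
  intro X Y Z
  refine le_antisymm ?_ (by simp)
  rintro x ⟨hx, hyz⟩
  obtain ⟨y, hy, z, hz, rfl⟩ := mem_sup.1 hyz
  obtain ⟨y, rfl⟩ := hf y
  obtain ⟨z, rfl⟩ := hf z
  have h1 : y + z ∈ X.comap f ⊓ (Y.comap f ⊔ Z.comap f) :=
    ⟨by simpa using hx, Submodule.add_mem_sup hy hz⟩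
  rw [h, mem_sup] at h1
  obtain ⟨p, ⟨hp1, hp2⟩, q, ⟨hq1, hq2⟩, hpq⟩ := h1
  rw [← map_add, ← hpq, map_add]
  exact Submodule.add_mem_sup ⟨hp1, hp2⟩ ⟨hq1, hq2⟩

/-- A distributive module has no quotient `S × S` with `S` simple, so its image in a power of `S`
has length at most one. -/
theorem dist_length_range_le_one {ι : Type*} {S : Type*} [AddCommGroup S] [Module R S]
    [IsSimpleModule R S] (h : IsDistributiveModule R D) (g : D →ₗ[R] (ι → S)) :
    Module.length R (LinearMap.range g) ≤ 1 := by
  by_cases h0 : ∃ x i, g x i ≠ 0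
  · obtain ⟨x, i, hx⟩ := h0
    have key : ∀ y, g y i = 0 → g y = 0 := by
      intro y hy
      by_contra hne
      obtain ⟨j, hj⟩ := Function.ne_iff.1 hne
      simp only [Pi.zero_apply] at hj
      obtain ⟨r, hr⟩ := IsSimpleModule.toSpanSingleton_surjective R hj (g x i)
      obtain ⟨t, ht⟩ := IsSimpleModule.toSpanSingleton_surjective R hj (g x j)
      simp only [LinearMap.toSpanSingleton_apply] at hr ht
      obtain ⟨a, h1, h2⟩ := dist_crit h (x - t • y) (r • y)
      obtain ⟨b, hb⟩ := mem_span_singleton.1 h1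
      obtain ⟨c, hc⟩ := mem_span_singleton.1 h2
      have e1 := congrArg (fun z => g z i) hb
      have e2 := congrArg (fun z => g z j) hc
      simp only [map_smul, map_sub, Pi.smul_apply, Pi.sub_apply, hy, ht, hr, smul_zero, sub_zero,
        sub_self] at e1 e2
      apply hx
      rw [sub_smul, one_smul, ← e1, sub_zero] at e2
      exact e2.symm
    have hinj : Function.Injective ((LinearMap.proj i : (ι → S) →ₗ[R] S).comp
        (LinearMap.range g).subtype) := by
      rw [← LinearMap.ker_eq_bot, LinearMap.ker_eq_bot']
      rintro ⟨_, y, rfl⟩ hz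
      exact Subtype.ext (key y hz)
    have := Module.length_le_of_injective _ hinj
    rwa [Module.length_eq_one R S] at this
  · have : LinearMap.range g = ⊥ := by
      rw [LinearMap.range_eq_bot]
      ext x i
      by_contra hx
      exact h0 ⟨x, i, hx⟩
    rw [this]; simp

end Distributive

section Components

variable {R M : Type*} [Ring R] [AddCommGroup M] [Module R M] {ι : Type*} {T : ι → Submodule R M}

/-- The coordinate maps of an internal direct sum. -/
theorem exists_components (hi : iSupIndep T) (ht : iSup T = ⊤) :
    ∃ f : ∀ i, M →ₗ[R] T i, (∀ x, {i | f i x ≠ 0}.Finite) ∧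
      (∀ (x : M) (s : Finset ι), (∀ i ∉ s, f i x = 0) → ∑ i ∈ s, (f i x : M) = x) ∧
      (∀ i (x : T i), f i x = x) ∧ ∀ i j, i ≠ j → ∀ x : T i, f j x = 0 := by
  classical
  have hint := DirectSum.isInternal_submodule_of_iSupIndep_of_iSup_eq_top hi ht
  let e := LinearEquiv.ofBijective (DirectSum.coeLinearMap T) hint
  have he : ∀ i (x : T i), e.symm (x : M) = DirectSum.lof R ι (fun i => T i) i x := by
    intro i x
    rw [LinearEquiv.symm_apply_eq]
    exact (DirectSum.coeLinearMap_lof T i x).symm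
  refine ⟨fun i => (DirectSum.component R ι (fun i => T i) i).comp e.symm.toLinearMap,
    ?_, ?_, ?_, ?_⟩
  · intro x
    refine (DFinsupp.finite_support (e.symm x)).subset ?_
    intro i hi
    exact hi
  · intro x s hs
    conv_rhs => rw [← e.apply_symm_apply x]
    have : e (e.symm x) = DirectSum.coeLinearMap T (e.symm x) := rfl
    rw [this, DirectSum.coeLinearMap_eq_dfinsuppSum, DFinsupp.sum]
    refine (Finset.sum_subset ?_ ?_).symm
    · intro i hi
      by_contra h
      exact (DFinsupp.mem_support_iff.1 hi) (hs i h)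
    · intro i _ hi
      have : (e.symm x) i = 0 := by simpa using hi
      exact congrArg Subtype.val this
  · intro i x
    simp [he, DirectSum.component.lof_self]
  · intro i j hij x
    simp [he, DirectSum.component.of, hij]

end Components

theorem length_biSup_le {R M : Type*} [Ring R] [AddCommGroup M] [Module R M] {ι : Type*}
    (F : Finset ι) (g : ι → Submodule R M) (h : ∀ i ∈ F, Module.length R (g i) ≤ 1) :
    Module.length R (⨆ i ∈ F, g i : Submodule R M) ≤ F.card := by
  classical
  have hsup : ∀ P Q : Submodule R M, Module.length R (P ⊔ Q : Submodule R M) ≤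
      Module.length R P + Module.length R Q := by
    intro P Q
    rw [← Module.length_prod]
    refine Module.length_le_of_surjective ((P.subtype.coprod Q.subtype).codRestrict (P ⊔ Q)
      (fun x => Submodule.add_mem_sup x.1.2 x.2.2)) ?_
    rintro ⟨x, hx⟩
    obtain ⟨y, hy, z, hz, rfl⟩ := mem_sup.1 hx
    exact ⟨(⟨y, hy⟩, ⟨z, hz⟩), rfl⟩
  induction F using Finset.induction_on with
  | empty =>
    have : (⨆ i ∈ (∅ : Finset ι), g i) = ⊥ := by simp
    rw [this, Module.length_bot]
    simp
  | insert a s ha ih =>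
    rw [Finset.iSup_insert, Finset.card_insert_of_notMem ha, add_comm]
    refine (hsup _ _).trans ?_
    push_cast
    exact add_le_add (h a (Finset.mem_insert_self _ _))
      (ih fun i hi => h i (Finset.mem_insert_of_mem hi))

/-! ### The minimum condition on principal right ideals -/

/-- Every left module in the universe of `R` is an internal direct sum of distributive modules. -/
def SumDist (R : Type u) [Ring R] : Prop :=
  ∀ (M : Type u) [AddCommGroup M] [Module R M],
    ∃ (ι : Type u) (T : ι → Submodule R M),
      iSupIndep T ∧ iSup T = ⊤ ∧ ∀ i, IsDistributiveModule R (T i)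

section Chase

variable {R : Type u} [Ring R] {ι : Type u} {T : ι → Submodule R (ℕ → R)}

/-- A gliding hump argument: for a decomposition of the product `R ^ ℕ` and a descending chain of
principal right ideals `a n R`, there are a position `n` and a finite set `F` of summands outside
of which every vector vanishing below `n` has components `y` with `a n • y ∈ a (n + 1) T i`. -/
theorem chase_claim (a : ℕ → R) (ha : ∀ n, a n ∣ a (n + 1)) (f : ∀ i, (ℕ → R) →ₗ[R] T i)
    (hf : ∀ x, {i | f i x ≠ 0}.Finite) :
    ∃ (n : ℕ) (F : Finset ι), ∀ x : ℕ → R, (∀ m < n, x m = 0) → ∀ i ∉ F,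
      ∃ d : T i, a n • f i x = a (n + 1) • d := by
  classical
  by_contra hcon
  push Not at hcon
  choose X hX I hI hne using hcon
  let Fs : ℕ → Finset ι := fun n => Nat.rec ∅
    (fun n F => F ∪ {I n F} ∪ (hf (a n • X n F)).toFinset) n
  have hFs : ∀ n, Fs (n + 1) = Fs n ∪ {I n (Fs n)} ∪ (hf (a n • X n (Fs n))).toFinset :=
    fun n => rfl
  have hmono : Monotone Fs := monotone_nat_of_le_succ fun n => by
    rw [hFs, Finset.union_assoc]; exact Finset.subset_union_left
  let x : ℕ → (ℕ → R) := fun k => X k (Fs k)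
  let i : ℕ → ι := fun k => I k (Fs k)
  have hx0 : ∀ k m, m < k → x k m = 0 := fun k m h => hX k (Fs k) m h
  have hi : ∀ k, i k ∉ Fs k := fun k => hI k (Fs k)
  have hil : ∀ l k, l < k → i l ∈ Fs k := fun l k h => hmono (Nat.succ_le_of_lt h) (by
    rw [Nat.succ_eq_add_one, hFs]; simp [i])
  have hzero : ∀ l k, l < k → f (i k) (a l • x l) = 0 := by
    intro l k h
    by_contra h0
    apply hi k
    refine hmono (Nat.succ_le_of_lt h) ?_
    rw [Nat.succ_eq_add_one, hFs]
    refine Finset.mem_union_right _ ?_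
    rw [Set.Finite.mem_toFinset]
    exact h0
  have hinj : Function.Injective i := by
    intro k l h
    by_contra hkl
    rcases lt_or_gt_of_ne hkl with hlt | hlt
    · exact hi l (h ▸ hil k l hlt)
    · exact hi k (h ▸ hil l k hlt)
  -- the infinite sum of the vectors `a k • x k`, which is finite in each coordinate; its component
  -- at every `i k` is nonzero because the later terms are divisible by `a (k + 1)`
  let z : ℕ → R := fun m => ∑ k ∈ Finset.range (m + 1), a k * x k m
  have hz : ∀ m N, m + 1 ≤ N → z m = ∑ k ∈ Finset.range N, a k * x k m := by
    intro m N h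
    refine Finset.sum_subset (Finset.range_mono h) ?_
    intro l _ hl
    rw [hx0 l m (by simpa using hl), mul_zero]
  have hnz : ∀ k, f (i k) z ≠ 0 := by
    intro k h0
    have hdiv : ∀ j, a (k + 1) ∣ a (k + 1 + j) := by
      intro j
      induction j with
      | zero => exact dvd_rfl
      | succ j ih => exact ih.trans (ha _)
    choose b hb using hdiv
    let w : ℕ → R := fun m => ∑ j ∈ Finset.range m, b j * x (k + 1 + j) m
    have hzw : z = ∑ l ∈ Finset.range k, a l • x l + a k • x k + a (k + 1) • w := by
      funext m
      rw [hz m (k + 1 + m) (by omega), Finset.sum_range_add, Finset.sum_range_succ]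
      simp only [Pi.add_apply, Finset.sum_apply, Pi.smul_apply, smul_eq_mul, w, Finset.mul_sum,
        ← mul_assoc, ← hb]
    apply hne k (Fs k) (-(f (i k) w))
    have h1 : f (i k) z = a k • f (i k) (x k) + a (k + 1) • f (i k) w := by
      rw [hzw, map_add, map_add, map_sum, map_smul, map_smul,
        Finset.sum_eq_zero (fun l hl => hzero l k (Finset.mem_range.1 hl)), zero_add]
    rw [h0] at h1
    rw [smul_neg]
    exact eq_neg_of_add_eq_zero_left h1.symm
  exact Set.infinite_range_of_injective hinj
    ((hf z).subset (by rintro _ ⟨k, rfl⟩; exact hnz k))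

/-- If the product `R ^ ℕ` is a direct sum of distributive modules, the chain `a n R` cannot be
strictly descending. Modulo a suitable maximal left ideal `m`, a free module of rank `F.card + 1`
sitting in the coordinates from `n` on would be covered by the images of the summands in `F`,
each of length at most one. -/
theorem chase_contra (hi : iSupIndep T) (ht : iSup T = ⊤)
    (hd : ∀ i, IsDistributiveModule R (T i)) (a : ℕ → R) (ha : ∀ n, a n ∣ a (n + 1))
    (hnot : ∀ n, ¬ a (n + 1) ∣ a n) : False := by
  classical
  obtain ⟨f, hf, hfs, -, -⟩ := exists_components hi ht
  obtain ⟨n, F, hF⟩ := chase_claim a ha f hf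
  let N := F.card + 1
  let emb : (Fin N → R) →ₗ[R] (ℕ → R) :=
    { toFun := fun v m => if h : n ≤ m ∧ m - n < N then v ⟨m - n, h.2⟩ else 0
      map_add' := by intro v w; funext m; simp only [Pi.add_apply]; split_ifs <;> simp
      map_smul' := by intro r v; funext m; simp only [Pi.smul_apply]; split_ifs <;> simp }
  let pr : (ℕ → R) →ₗ[R] (Fin N → R) := LinearMap.funLeft R R (fun j : Fin N => n + j)
  have hpe : ∀ v, pr (emb v) = v := by
    intro v; funext j
    simp [pr, emb, LinearMap.funLeft_apply]
  have hemb : ∀ v, ∀ m < n, emb v m = 0 := by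
    intro v m hm
    simp [emb, not_le.2 hm]
  let g : ∀ i, T i →ₗ[R] (Fin N → R) := fun i => pr.comp (T i).subtype
  -- `θ v` is the part of `v` coming from the summands in `F`; it agrees with `v` modulo `m`
  let θ : (Fin N → R) → (Fin N → R) := fun v => ∑ i ∈ F, g i (f i (emb v))
  have hθs : ∀ (r : R) v, θ (r • v) = r • θ v := by
    intro r v; simp [θ, Finset.smul_sum]
  have h1 : ∀ v, ∃ d, a n • (v - θ v) = a (n + 1) • d := by
    intro v
    let s : Finset ι := (hf (emb v)).toFinset
    have hv : v = ∑ i ∈ F ∪ (s \ F), g i (f i (emb v)) := by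
      conv_lhs => rw [← hpe v, ← hfs (emb v) (F ∪ (s \ F)) (by
        intro i hi
        by_contra h
        apply hi
        rw [Finset.union_sdiff_self_eq_union]
        exact Finset.mem_union_right _ (by simpa [s] using h))]
      rw [map_sum]
      rfl
    rw [Finset.sum_union Finset.disjoint_sdiff] at hv
    have h2 : ∀ i, ∃ d : T i, i ∉ F → a n • f i (emb v) = a (n + 1) • d := by
      intro i
      by_cases h : i ∈ F
      · exact ⟨0, fun h' => absurd h h'⟩
      · obtain ⟨d, hd⟩ := hF (emb v) (hemb v) i h
        exact ⟨d, fun _ => hd⟩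
    choose d hd using h2
    refine ⟨∑ i ∈ s \ F, g i (d i), ?_⟩
    have h3 : v - θ v = ∑ i ∈ s \ F, g i (f i (emb v)) := by
      rw [sub_eq_iff_eq_add']; exact hv
    rw [h3, Finset.smul_sum, Finset.smul_sum]
    refine Finset.sum_congr rfl fun i hi => ?_
    rw [← map_smul, hd i (Finset.mem_sdiff.1 hi).2, map_smul]
  -- the largest left ideal `B` with `a n B ⊆ a (n + 1) R`
  let B : Ideal R :=
    { carrier := {b | ∀ x, a (n + 1) ∣ a n * x * b}
      add_mem' := by intro b c hb hc x; rw [mul_add]; exact dvd_add (hb x) (hc x)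
      zero_mem' := by intro x; simp
      smul_mem' := by
        intro r b hb x
        have := hb (x * r)
        rwa [smul_eq_mul, ← mul_assoc, mul_assoc (a n)] }
  have hB : B ≠ ⊤ := by
    rw [Ne, Ideal.eq_top_iff_one]
    intro h
    have := h 1
    simp only [mul_one] at this
    exact hnot n this
  obtain ⟨m, hm, hBm⟩ := Ideal.exists_le_maximal B hB
  have : IsSimpleModule R (R ⧸ m) := by
    rw [isSimpleModule_iff_isCoatom]; exact hm.out
  let π : (Fin N → R) →ₗ[R] (Fin N → R ⧸ m) := LinearMap.pi fun j => m.mkQ.comp (LinearMap.proj j)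
  have hπ : ∀ v, π v = π (θ v) := by
    intro v
    rw [← sub_eq_zero, ← map_sub]
    funext j
    change m.mkQ ((v - θ v) j) = 0
    rw [Submodule.mkQ_apply, Submodule.Quotient.mk_eq_zero]
    apply hBm
    intro x
    obtain ⟨d, hd⟩ := h1 (x • v)
    rw [hθs, ← smul_sub] at hd
    refine ⟨d j, ?_⟩
    have := congrFun hd j
    simpa [mul_assoc] using this
  have htop : (⨆ i ∈ F, LinearMap.range (π.comp (g i))) = ⊤ := by
    rw [eq_top_iff]
    rintro y -
    obtain ⟨v, rfl⟩ : ∃ v, π v = y := by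
      choose v hv using fun j => Submodule.mkQ_surjective m (y j)
      exact ⟨v, funext hv⟩
    rw [hπ, map_sum]
    refine Submodule.sum_mem _ fun i hi => ?_
    exact Submodule.mem_iSup_of_mem i (Submodule.mem_iSup_of_mem hi ⟨_, rfl⟩)
  have hlen := length_biSup_le F (fun i => LinearMap.range (π.comp (g i)))
    fun i _ => dist_length_range_le_one (hd i) _
  rw [htop, Module.length_top, Module.length_pi_of_fintype] at hlen
  simp only [Module.length_eq_one, Finset.sum_const, Finset.card_univ, Fintype.card_fin,
    nsmul_eq_mul, mul_one, N] at hlen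
  have := ENat.natCast_le_natCast.1 hlen
  omega

end Chase

/-- The minimum condition on principal right ideals: `a ∣ b` means `b ∈ a R`. -/
def MinCond (Q : Type*) [Ring Q] : Prop :=
  ∀ s : Set Q, s.Nonempty → ∃ a ∈ s, ∀ b ∈ s, a ∣ b → b ∣ a

theorem SumDist.minCond {R : Type u} [Ring R] (H : SumDist R) : MinCond R := by
  intro s hs
  by_contra hcon
  push Not at hcon
  choose! g hg hdvd hnot using hcon
  obtain ⟨a0, ha0⟩ := hs
  let a : ℕ → R := fun n => g^[n] a0
  have hs : ∀ n, a n ∈ s := by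
    intro n
    induction n with
    | zero => exact ha0
    | succ n ih => simp only [a, Function.iterate_succ_apply']; exact hg _ ih
  have hsucc : ∀ n, a (n + 1) = g (a n) := fun n => Function.iterate_succ_apply' _ _ _
  obtain ⟨ι, T, hi, ht, hd⟩ := H (ℕ → R)
  exact chase_contra hi ht hd a (fun n => hsucc n ▸ hdvd _ (hs n))
    (fun n => hsucc n ▸ hnot _ (hs n))

theorem MinCond.of_surjective {R Q : Type*} [Ring R] [Ring Q] (h : MinCond R) (f : R →+* Q)
    (hf : Function.Surjective f) : MinCond Q := by
  intro s ⟨q, hq⟩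
  obtain ⟨p, rfl⟩ := hf q
  obtain ⟨a, ha, hmin⟩ := h (f ⁻¹' s) ⟨p, hq⟩
  refine ⟨f a, ha, ?_⟩
  rintro _ hb ⟨q, rfl⟩
  obtain ⟨r, rfl⟩ := hf q
  rw [← map_mul] at hb ⊢
  exact map_dvd f (hmin (a * r) hb ⟨r, rfl⟩)

/-! ### Semisimplicity modulo the Jacobson radical -/

theorem isSemisimpleModule_of_subsingleton {R M : Type*} [Ring R] [AddCommGroup M] [Module R M]
    [Subsingleton M] : IsSemisimpleModule R M :=
  (isSemisimpleModule_iff R M).mpr Subsingleton.instComplementedLattice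

section Semisimple

variable {Q : Type*} [Ring Q]

/-- A ring with zero Jacobson radical is semiprime: if `b Q b = 0` then `Q b` is a nil left ideal. -/
theorem exists_mul_mul_ne_zero (hJ : Ring.jacobson Q = ⊥) {b : Q} (hb : b ≠ 0) :
    ∃ r, b * r * b ≠ 0 := by
  by_contra hcon
  push Not at hcon
  apply hb
  have : b ∈ Ring.jacobson Q := by
    rw [← Ideal.jacobson_bot, Ideal.mem_jacobson_iff]
    intro y
    refine ⟨1 - y * b, ?_⟩
    have h2 : y * b * y * b = 0 := by
      rw [mul_assoc, mul_assoc, ← mul_assoc b y b, hcon, mul_zero]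
    simp only [Submodule.mem_bot, sub_mul, one_mul]
    rw [h2]
    abel
  rwa [hJ] at this

/-- Under the minimum condition, every nonzero principal right ideal `c Q` contains a primitive
idempotent `e`. It is found in a minimal nonzero `b Q ⊆ c Q`; then `e Q e` is a division ring,
which makes `Q e` simple. -/
theorem exists_idempotent (hQ : MinCond Q) (hJ : Ring.jacobson Q = ⊥) {c : Q} (hc : c ≠ 0) :
    ∃ e : Q, e ≠ 0 ∧ e * e = e ∧ c ∣ e ∧ IsSimpleModule Q (span Q {e}) := by
  obtain ⟨b, ⟨hb, hcb⟩, hmin⟩ := hQ {b | b ≠ 0 ∧ c ∣ b} ⟨c, hc, dvd_rfl⟩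
  replace hmin : ∀ d, d ≠ 0 → b ∣ d → d ∣ b := fun d h1 h2 => hmin d ⟨h1, hcb.trans h2⟩ h2
  obtain ⟨r, hr⟩ := exists_mul_mul_ne_zero hJ hb
  obtain ⟨s, hs⟩ := hmin _ hr ⟨r * b, by rw [mul_assoc]⟩
  -- left multiplication by `b r` is injective on the minimal right ideal `b Q`, and maps it onto `b Q`
  have hu : ∀ d, b ∣ d → b * r * d = 0 → d = 0 := by
    intro d hd h0
    by_contra hne
    obtain ⟨t, ht⟩ := hmin d hne hd
    apply hr
    rw [ht]
    rw [ht] at h0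
    calc d * t * r * (d * t) = (d * t * r * d) * t := by simp only [mul_assoc]
      _ = 0 := by rw [h0, zero_mul]
  obtain ⟨e, he⟩ : ∃ e, e = b * s * r := ⟨_, rfl⟩
  have hbe : b ∣ e := ⟨s * r, by rw [he, mul_assoc]⟩
  have hue : b * r * e = b * r := by
    calc b * r * e = (b * r * b * s) * r := by rw [he]; simp only [mul_assoc]
      _ = b * r := by rw [← hs]
  have hee : e * e = e := by
    have := hu (e * e - e) (dvd_sub (hbe.mul_right e) hbe)
      (by rw [mul_sub, ← mul_assoc, hue, hue, sub_self])
    exact sub_eq_zero.1 this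
  have he0 : e ≠ 0 := by
    rintro h0
    apply hr
    rw [← hue, h0, mul_zero, zero_mul]
  refine ⟨e, he0, hee, hcb.trans hbe, ?_⟩
  have hmine : ∀ d, d ≠ 0 → e ∣ d → d ∣ e := fun d h1 h2 => (hmin d h1 (hbe.trans h2)).trans hbe
  -- nonzero elements of `e Q e` are invertible there
  have hinv : ∀ d, d ≠ 0 → e * d = d → d * e = d →
      ∃ v, e * v = v ∧ v * e = v ∧ v ≠ 0 ∧ d * v = e := by
    intro d h1 h2 h3
    obtain ⟨w, hw⟩ := hmine d h1 ⟨d, h2.symm⟩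
    have h4 : d * (e * w * e) = e := by
      calc d * (e * w * e) = (d * e) * w * e := by simp only [mul_assoc]
        _ = e := by rw [h3, ← hw, hee]
    refine ⟨e * w * e, by simp only [← mul_assoc, hee], by simp only [mul_assoc, hee], ?_, h4⟩
    rintro h0
    rw [h0, mul_zero] at h4
    exact he0 h4.symm
  rw [isSimpleModule_iff_isAtom, isAtom_iff_le_of_ge]
  refine ⟨by simpa using he0, fun N hN hle => ?_⟩
  obtain ⟨x, hxN, hx0⟩ := (Submodule.ne_bot_iff _).1 hN
  obtain ⟨y, hy⟩ := mem_span_singleton.1 (hle hxN)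
  have hxe : x * e = x := by rw [← hy, smul_eq_mul, mul_assoc, hee]
  obtain ⟨t, ht⟩ := exists_mul_mul_ne_zero hJ hx0
  have hd0 : e * t * x ≠ 0 := by
    intro h0
    apply ht
    rw [← hxe]
    calc x * e * t * (x * e) = x * (e * t * x) * e := by simp only [mul_assoc]
      _ = 0 := by rw [h0, mul_zero, zero_mul]
  obtain ⟨v, hv1, hv2, hv0, hv⟩ := hinv (e * t * x) hd0 (by simp only [← mul_assoc, hee])
    (by rw [mul_assoc, hxe])
  obtain ⟨v', hv'1, -, -, hv'⟩ := hinv v hv0 hv1 hv2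
  have h5 : e * t * x = v' := by
    calc e * t * x = e * t * x * (v * v') := by rw [hv', mul_assoc (e * t), hxe]
      _ = e * v' := by rw [← mul_assoc, hv]
      _ = v' := hv'1
  rw [span_singleton_le_iff_mem]
  have h6 : e = (v * e * t) • x := by
    calc e = v * (e * t * x) := by rw [h5, hv']
      _ = (v * e * t) • x := by simp only [smul_eq_mul, mul_assoc]
  rw [h6]
  exact N.smul_mem _ hxN

/-- Choose a minimal `c Q` such that `1 - c` lies in a semisimple left ideal. If `c ≠ 0`, an
idempotent `e ∈ c Q` allows `c` to be replaced by `c - e c`, adding the semisimple left ideal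
`Q e c`. -/
theorem isSemisimpleRing_of_minCond (hQ : MinCond Q) (hJ : Ring.jacobson Q = ⊥) :
    IsSemisimpleRing Q := by
  obtain ⟨c, ⟨L, hL, hcL⟩, hmin⟩ := hQ {c | ∃ L : Ideal Q, IsSemisimpleModule Q L ∧ 1 - c ∈ L}
    ⟨1, ⊥, isSemisimpleModule_of_subsingleton, by simp⟩
  have hc : c = 0 := by
    by_contra hc
    obtain ⟨e, he0, hee, ⟨w, hw⟩, hsimp⟩ := exists_idempotent hQ hJ hc
    have hss : IsSemisimpleModule Q (LinearMap.range
        ((LinearMap.toSpanSingleton Q Q c).comp (span Q {e}).subtype)) := IsSemisimpleModule.range _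
    obtain ⟨v, hv⟩ := hmin (c - e * c) ⟨L ⊔ _, hL.sup hss, by
      have : 1 - (c - e * c) = (1 - c) + e * c := by abel
      rw [this]
      exact Submodule.add_mem_sup hcL ⟨⟨e, mem_span_singleton_self e⟩, by simp⟩⟩
      ⟨1 - w * c, by rw [mul_sub, mul_one, ← mul_assoc, ← hw]⟩
    have hec : e * c = 0 := by
      rw [hv, ← mul_assoc, mul_sub, ← mul_assoc, hee, sub_self, zero_mul]
    apply he0
    rw [← hee, hw, ← mul_assoc, ← hw, hec, zero_mul]
  rw [hc, sub_zero, ← Ideal.eq_top_iff_one] at hcL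
  subst hcL
  exact (LinearEquiv.isSemisimpleModule_iff Submodule.topEquiv).1 hL

end Semisimple

/-! ### Distributive modules are cyclic; chain conditions on the ring -/

section Perfect

variable {R : Type u} [Ring R]

/-- If `a = a x` with `x` in the Jacobson radical then `a = 0`, since `1 - x` is a unit. -/
theorem eq_zero_of_mul_jacobson {a j r : R} (hj : j ∈ Ring.jacobson R) (h : a = a * j * r) :
    a = 0 := by
  have key : ∀ x ∈ Ring.jacobson R, ∃ z, z * (1 - x) = 1 := by
    intro x hx
    rw [← Ideal.jacobson_bot, Ideal.mem_jacobson_iff] at hx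
    obtain ⟨z, hz⟩ := hx (-1)
    refine ⟨z, ?_⟩
    rw [Submodule.mem_bot, sub_eq_zero] at hz
    rw [mul_sub, mul_one]
    rw [mul_neg, mul_one, neg_mul] at hz
    rw [← hz]; abel
  have hx : j * r ∈ Ring.jacobson R := Ideal.mul_mem_right _ _ hj
  obtain ⟨z, hz⟩ := key _ hx
  have hz' : z = 1 - -(z * (j * r)) := by
    rw [mul_sub, mul_one] at hz
    rw [← hz]; abel
  obtain ⟨z', hz2⟩ := key (-(z * (j * r))) (neg_mem (Ideal.mul_mem_left _ _ hx))
  rw [← hz'] at hz2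
  have h3 : z' = 1 - j * r := left_inv_eq_right_inv hz2 hz
  have h4 : a * (1 - j * r) = 0 := by rw [mul_sub, mul_one, ← mul_assoc, ← h, sub_self]
  rw [h3] at hz2
  calc a = a * ((1 - j * r) * z) := by rw [hz2, mul_one]
    _ = 0 := by rw [← mul_assoc, h4, zero_mul]

/-- `J D`, where `J` is the Jacobson radical. -/
def radSpan (R D : Type*) [Ring R] [AddCommGroup D] [Module R D] : Submodule R D :=
  span R {x | ∃ j ∈ Ring.jacobson R, ∃ d : D, x = j • d}

/-- The minimum condition on principal right ideals gives Nakayama's lemma for arbitrary left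
modules. -/
theorem eq_top_of_sup_radSpan (hR : MinCond R) {D : Type*} [AddCommGroup D] [Module R D]
    (N : Submodule R D) (h : N ⊔ radSpan R D = ⊤) : N = ⊤ := by
  by_contra hN
  obtain ⟨d0, hd0⟩ : ∃ d0, d0 ∉ N := by
    by_contra! hcon
    exact hN (eq_top_iff.2 fun x _ => hcon x)
  obtain ⟨a, ⟨d, hd⟩, hmin⟩ := hR {a | ∃ d : D, a • d ∉ N} ⟨1, d0, by simpa using hd0⟩
  have hkill : ∀ x ∈ radSpan R D, a • x ∈ N := by
    intro x hx
    induction hx using Submodule.closure_induction with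
    | zero => simp
    | add x y _ _ hx hy => rw [smul_add]; exact add_mem hx hy
    | smul_mem r x hx =>
      obtain ⟨j, hj, d, rfl⟩ := hx
      by_contra hne
      have hj' : r * j ∈ Ring.jacobson R := Ideal.mul_mem_left _ _ hj
      obtain ⟨s, hs⟩ := hmin (a * (r * j)) ⟨d, by simpa only [mul_smul] using hne⟩ ⟨_, rfl⟩
      apply hne
      rw [eq_zero_of_mul_jacobson hj' hs]
      simp
  obtain ⟨n, hn, x, hx, rfl⟩ := mem_sup.1 (h ▸ mem_top : d ∈ N ⊔ radSpan R D)
  apply hd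
  rw [smul_add]
  exact add_mem (N.smul_mem _ hn) (hkill x hx)

/-- Semisimplicity of `R ⧸ J` over itself, restricted along `R → R ⧸ J`. -/
theorem isSemisimpleModule_quot_jacobson (h : IsSemisimpleRing (R ⧸ Ring.jacobson R)) :
    IsSemisimpleModule R (R ⧸ Ring.jacobson R) := by
  let l : (R ⧸ Ring.jacobson R) →ₛₗ[Ideal.Quotient.mk (Ring.jacobson R)] (R ⧸ Ring.jacobson R) :=
    { toFun := id
      map_add' := fun _ _ => rfl
      map_smul' := by
        intro r x
        obtain ⟨x, rfl⟩ := Ideal.Quotient.mk_surjective x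
        rfl }
  have : RingHomSurjective (Ideal.Quotient.mk (Ring.jacobson R)) :=
    ⟨Ideal.Quotient.mk_surjective⟩
  exact (LinearMap.isSemisimpleModule_iff_of_bijective l Function.bijective_id).2 h

/-- The map `R / J → D`, `r ↦ r x`, for a module killed by `J`. -/
def quotMap {D : Type*} [AddCommGroup D] [Module R D]
    (hJ : ∀ j ∈ Ring.jacobson R, ∀ d : D, j • d = 0) (x : D) : (R ⧸ Ring.jacobson R) →ₗ[R] D :=
  (Ring.jacobson R).liftQ (LinearMap.toSpanSingleton R D x) (fun j hj => by
    simpa using hJ j hj x)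

theorem quotMap_mkQ {D : Type*} [AddCommGroup D] [Module R D]
    (hJ : ∀ j ∈ Ring.jacobson R, ∀ d : D, j • d = 0) (x : D) (r : R) :
    quotMap hJ x ((Ring.jacobson R).mkQ r) = r • x := by
  exact (Submodule.liftQ_apply _ _ _).trans (LinearMap.toSpanSingleton_apply _ _ _ _)

/-- A distributive module over a semisimple ring is cyclic: an `x` with minimal annihilator
generates, since a nonzero `y` in a complement of `R x` has `Ann (x + y)` smaller than `Ann x`. -/
theorem cyclic_of_jacobson_kills (h : IsSemisimpleRing (R ⧸ Ring.jacobson R)) {D : Type u}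
    [AddCommGroup D] [Module R D] (hD : IsDistributiveModule R D)
    (hJ : ∀ j ∈ Ring.jacobson R, ∀ d : D, j • d = 0) : ∃ x : D, span R {x} = ⊤ := by
  have hss := isSemisimpleModule_quot_jacobson h
  have hDss : IsSemisimpleModule R D := by
    refine isSemisimpleModule_of_isSemisimpleModule_submodule'
      (p := fun x : D => LinearMap.range (quotMap hJ x))
      (fun x => IsSemisimpleModule.range _) ?_
    rw [eq_top_iff]
    intro x _
    exact Submodule.mem_iSup_of_mem x ⟨(Ring.jacobson R).mkQ 1, by rw [quotMap_mkQ, one_smul]⟩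
  have hart : IsArtinian R (R ⧸ Ring.jacobson R) := inferInstance
  obtain ⟨_, ⟨x, rfl⟩, hmin⟩ := IsArtinian.set_has_minimal
    (Set.range fun x : D => LinearMap.ker (quotMap hJ x)) ⟨_, 0, rfl⟩
  refine ⟨x, ?_⟩
  obtain ⟨C, hC⟩ := exists_isCompl (span R {x})
  have hdisj := Submodule.disjoint_def.1 hC.disjoint
  suffices hbot : C = ⊥ by
    have := hC.sup_eq_top
    rwa [hbot, sup_bot_eq] at this
  rw [Submodule.eq_bot_iff]
  intro y hy
  have hle : LinearMap.ker (quotMap hJ (x + y)) ≤ LinearMap.ker (quotMap hJ x) := by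
    intro q hq
    obtain ⟨r, rfl⟩ := Submodule.mkQ_surjective _ q
    rw [LinearMap.mem_ker, quotMap_mkQ] at hq ⊢
    refine hdisj _ (smul_mem _ _ (mem_span_singleton_self x)) ?_
    rw [smul_add, add_eq_zero_iff_eq_neg] at hq
    rw [hq]
    exact neg_mem (C.smul_mem _ hy)
  have heq : LinearMap.ker (quotMap hJ (x + y)) = LinearMap.ker (quotMap hJ x) :=
    (eq_or_lt_of_le hle).resolve_right (hmin _ ⟨x + y, rfl⟩)
  obtain ⟨a, h1, h2⟩ := dist_crit hD x y
  have hax : a • x = 0 := hdisj _ (smul_mem _ _ (mem_span_singleton_self x))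
    ((span_singleton_le_iff_mem y C).2 hy h1)
  have hay : (1 - a) • y = 0 := hdisj _ h2 (C.smul_mem _ hy)
  have haz : a • (x + y) = 0 := by
    have : (Ring.jacobson R).mkQ a ∈ LinearMap.ker (quotMap hJ x) := by
      rw [LinearMap.mem_ker, quotMap_mkQ, hax]
    rwa [← heq, LinearMap.mem_ker, quotMap_mkQ] at this
  rw [smul_add, hax, zero_add] at haz
  rwa [sub_smul, haz, one_smul, sub_zero] at hay

theorem SumDist.semisimple (H : SumDist R) : IsSemisimpleRing (R ⧸ Ring.jacobson R) :=
  isSemisimpleRing_of_minCond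
    (H.minCond.of_surjective (Ideal.Quotient.mk (Ring.jacobson R)) Ideal.Quotient.mk_surjective)
    (Ring.jacobson_quotient_jacobson R)

theorem SumDist.cyclic (H : SumDist R) {D : Type u} [AddCommGroup D] [Module R D]
    (hD : IsDistributiveModule R D) : ∃ x : D, span R {x} = ⊤ := by
  obtain ⟨x, hx⟩ := cyclic_of_jacobson_kills H.semisimple
    (dist_of_surjective hD (radSpan R D).mkQ (Submodule.mkQ_surjective _)) (by
      intro j hj d
      obtain ⟨d, rfl⟩ := Submodule.mkQ_surjective _ d
      rw [← map_smul, Submodule.mkQ_apply, Submodule.Quotient.mk_eq_zero]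
      exact subset_span ⟨j, hj, d, rfl⟩)
  obtain ⟨x, rfl⟩ := Submodule.mkQ_surjective _ x
  refine ⟨x, eq_top_of_sup_radSpan H.minCond _ ?_⟩
  have h2 : (span R {x}).map (radSpan R D).mkQ = ⊤ := by
    rw [Submodule.map_span, Set.image_singleton, hx]
  have := congrArg (Submodule.comap (radSpan R D).mkQ) h2
  rw [Submodule.comap_map_mkQ, Submodule.comap_top] at this
  rwa [sup_comm]

theorem SumDist.noetherian_of_dist (H : SumDist R) {D : Type u} [AddCommGroup D] [Module R D]
    (hD : IsDistributiveModule R D) : IsNoetherian R D := by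
  refine ⟨fun N => ?_⟩
  obtain ⟨x, hx⟩ := H.cyclic (dist_of_injective hD N.subtype N.injective_subtype)
  refine ⟨{(x : D)}, ?_⟩
  have := congrArg (Submodule.map N.subtype) hx
  rw [Submodule.map_span, Submodule.map_top, Submodule.range_subtype] at this
  simpa using this

theorem SumDist.isNoetherianRing (H : SumDist R) : IsNoetherianRing R := by
  obtain ⟨ι, T, hi, ht, hd⟩ := H R
  obtain ⟨f, hf, hfs, -, -⟩ := exists_components hi ht
  let s := (hf 1).toFinset
  have htop : (⨆ i : s, T i) = ⊤ := by
    have h1 : ((1 : R) ∈ ⨆ i : s, T i) := by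
      rw [← hfs 1 s (by simp [s])]
      exact Submodule.sum_mem _ fun i hi =>
        Submodule.mem_iSup_of_mem (⟨i, hi⟩ : s) (f i 1).2
    exact (Ideal.eq_top_iff_one _).2 h1
  have : ∀ i : s, IsNoetherian R (T i) := fun i => H.noetherian_of_dist (hd i)
  have : IsNoetherian R (⨆ i : s, T i : Submodule R R) := isNoetherian_iSup
  rw [htop] at this
  exact isNoetherian_of_linearEquiv Submodule.topEquiv

/-- The left annihilator of a left ideal. -/
def lann (K : Ideal R) : Ideal R where
  carrier := {m | ∀ x ∈ K, m * x = 0}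
  add_mem' := by intro a b ha hb x hx; rw [add_mul, ha x hx, hb x hx, add_zero]
  zero_mem' := by intro x _; simp
  smul_mem' := by intro r b hb x hx; rw [smul_eq_mul, mul_assoc, hb x hx, mul_zero]

theorem mem_lann {K : Ideal R} {m : R} : m ∈ lann K ↔ ∀ x ∈ K, m * x = 0 := Iff.rfl

theorem lann_anti {K L : Ideal R} (h : K ≤ L) : lann L ≤ lann K := fun _ hm x hx => hm x (h hx)

/-- The left annihilators of the powers of `J` stabilise by the Noetherian condition, and the
minimum condition on principal right ideals forces the stable value to be the whole ring. -/
theorem SumDist.isNilpotent (H : SumDist R) : IsNilpotent (Ring.jacobson R) := by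
  have hnoeth := H.isNoetherianRing
  have hsucc : ∀ k, Ring.jacobson R ^ (k + 1 + 1) = Ring.jacobson R * Ring.jacobson R ^ (k + 1) :=
    fun k => Submodule.pow_succ' _ (Nat.succ_ne_zero _)
  obtain ⟨n, hn⟩ := monotone_stabilizes_iff_noetherian.2 hnoeth
    ⟨fun k => lann (Ring.jacobson R ^ (k + 1)), monotone_nat_of_le_succ fun k => lann_anti
      ((hsucc k).trans_le Ideal.mul_le_right)⟩
  have hn1 : lann (Ring.jacobson R ^ (n + 1)) = lann (Ring.jacobson R ^ (n + 1 + 1)) :=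
    hn (n + 1) n.le_succ
  rw [hsucc] at hn1
  clear hn
  refine ⟨n + 1, ?_⟩
  generalize Ring.jacobson R ^ (n + 1) = K at hn1
  rw [Ideal.zero_eq_bot, Submodule.eq_bot_iff]
  by_cases h1 : (1 : R) ∈ lann K
  · intro x hx
    simpa using h1 x hx
  · exfalso
    obtain ⟨a, ha, hmin⟩ := H.minCond {a | a ∉ lann K} ⟨1, h1⟩
    apply ha
    rw [hn1, mem_lann]
    intro x hx
    refine Submodule.mul_induction_on hx ?_ ?_
    · intro j hj y hy
      rw [← mul_assoc]
      by_cases haj : a * j ∈ lann K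
      · exact haj y hy
      · obtain ⟨s, hs⟩ := hmin _ haj ⟨j, rfl⟩
        exact absurd (eq_zero_of_mul_jacobson hj hs ▸ (lann K).zero_mem) ha
    · intro x y hx hy
      rw [mul_add, hx, hy, add_zero]

theorem SumDist.isArtinianRing (H : SumDist R) : IsArtinianRing R := by
  have : IsSemiprimaryRing R := ⟨H.semisimple, H.isNilpotent⟩
  exact IsSemiprimaryRing.isNoetherian_iff_isArtinian.1 H.isNoetherianRing

theorem SumDist.length_le (H : SumDist R) {D : Type u} [AddCommGroup D] [Module R D]
    (hD : IsDistributiveModule R D) : Module.length R D ≤ Module.length R R := by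
  obtain ⟨x, hx⟩ := H.cyclic hD
  refine Module.length_le_of_surjective (LinearMap.toSpanSingleton R D x) ?_
  rw [← LinearMap.range_eq_top, LinearMap.range_toSpanSingleton, hx]

end Perfect

/-! ### The Harada-Sai lemma -/

section HaradaSai

/-- If `g` loses no length on `P` and `P` already has the full image of `g`, then `P` is a complement
of the kernel of `g`. -/
theorem isCompl_ker_of_length {R M N : Type*} [Ring R] [AddCommGroup M] [Module R M]
    [AddCommGroup N] [Module R N] (g : M →ₗ[R] N) (P : Submodule R M)
    (h1 : Module.length R P ≤ Module.length R (P.map g))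
    (h2 : Module.length R (LinearMap.range g) ≤ Module.length R (P.map g))
    (hfin : Module.length R (LinearMap.range g) ≠ ⊤) : IsCompl P (LinearMap.ker g) := by
  have hle : P.map g ≤ LinearMap.range g := LinearMap.map_le_range
  have hmapfin : Module.length R (P.map g) ≠ ⊤ :=
    ne_top_of_le_ne_top hfin (Module.length_le_of_injective _ (Submodule.inclusion_injective hle))
  constructor
  · have hex := Module.length_eq_add_of_exact (LinearMap.ker (g.submoduleMap P)).subtype
      (g.submoduleMap P) (Submodule.subtype_injective _) (g.submoduleMap_surjective P)
      (LinearMap.exact_subtype_ker_map _)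
    rw [hex] at h1
    have h0 : Module.length R (LinearMap.ker (g.submoduleMap P)) = 0 := by
      obtain ⟨m, hm⟩ := ENat.ne_top_iff_exists.1 hmapfin
      rw [← hm] at h1
      have h3 : Module.length R (LinearMap.ker (g.submoduleMap P)) + (m : ℕ∞) ≤ 0 + m := by
        rwa [zero_add]
      exact le_zero_iff.1 ((ENat.add_le_add_iff_right (ENat.natCast_ne_top m)).1 h3)
    rw [Module.length_eq_zero_iff, Submodule.subsingleton_iff_eq_bot] at h0
    rw [Submodule.disjoint_def]
    intro x hx hgx
    have : (⟨x, hx⟩ : P) ∈ LinearMap.ker (g.submoduleMap P) := Subtype.ext hgx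
    rw [h0, Submodule.mem_bot] at this
    exact congrArg Subtype.val this
  · have heq : P.map g = LinearMap.range g := by
      by_contra hne
      have := Order.height_strictMono (lt_of_le_of_ne hle hne)
        (by rw [← Module.length_submodule]; exact hmapfin.lt_top)
      rw [← Module.length_submodule, ← Module.length_submodule] at this
      exact absurd h2 (not_le.2 this)
    rw [codisjoint_iff, eq_top_iff]
    intro x _
    obtain ⟨y, hy, hxy⟩ : g x ∈ P.map g := heq ▸ ⟨x, rfl⟩
    refine mem_sup.2 ⟨y, hy, x - y, ?_, by abel⟩
    rw [LinearMap.mem_ker, map_sub, hxy, sub_self]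

variable {R : Type u} [Ring R] {I : Type*} {Y : I → Type u} [∀ i, AddCommGroup (Y i)]
  [∀ i, Module R (Y i)]

/-- `NC n i j w`: the map `w : Y i → Y j` is a composite of `n` non-bijective maps between
members of the family `Y`. -/
inductive NC : ℕ → ∀ i j, (Y i →ₗ[R] Y j) → Prop
  | zero (i : I) : NC 0 i i LinearMap.id
  | succ {n : ℕ} {i j k : I} {w : Y i →ₗ[R] Y j} (f : Y j →ₗ[R] Y k) (hw : NC n i j w)
      (hf : ¬ Function.Bijective f) : NC (n + 1) i k (f.comp w)

theorem NC.split {m : ℕ} : ∀ {n : ℕ} {i k : I} {w : Y i →ₗ[R] Y k}, NC (m + n) i k w →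
    ∃ (j : I) (w1 : Y i →ₗ[R] Y j) (w2 : Y j →ₗ[R] Y k),
      NC m i j w1 ∧ NC n j k w2 ∧ w = w2.comp w1 := by
  intro n
  induction n with
  | zero =>
    intro i k w h
    exact ⟨k, w, LinearMap.id, h, NC.zero k, rfl⟩
  | succ n ih =>
    intro i k w h
    cases h with
    | succ f hw hf =>
      obtain ⟨j, w1, w2, h1, h2, rfl⟩ := ih hw
      exact ⟨j, w1, f.comp w2, h1, NC.succ f h2 hf, rfl⟩

theorem NC.append {m n : ℕ} {i j k : I} {w1 : Y i →ₗ[R] Y j} {w2 : Y j →ₗ[R] Y k}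
    (h1 : NC m i j w1) (h2 : NC n j k w2) : NC (m + n) i k (w2.comp w1) := by
  induction h2 with
  | zero => exact h1
  | succ f hw hf ih => exact NC.succ f (ih h1) hf

/-- The inductive form of the Harada-Sai lemma: a nonzero composite of `2 ^ k - 1` non-isomorphisms
has image of length at most `c - k`. Doubling the number of maps must shrink the image: otherwise
the middle map of the composite is seen to split on both sides, hence is bijective. -/
theorem NC.length_range_add_le (hY : ∀ i, IsIndecomposableModule R (Y i)) (c : ℕ)
    (hc : ∀ i, Module.length R (Y i) ≤ c) : ∀ (k : ℕ) {i j : I} {w : Y i →ₗ[R] Y j},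
    NC (2 ^ k - 1) i j w → w ≠ 0 → Module.length R (LinearMap.range w) + k ≤ c := by
  intro k
  induction k with
  | zero =>
    intro i j w h hw
    simpa using (Module.length_le_of_injective _ (Submodule.subtype_injective (LinearMap.range w))).trans (hc j)
  | succ k ih =>
    intro i j w h hw
    have hpow : 2 ^ (k + 1) - 1 = (2 ^ k - 1) + (1 + (2 ^ k - 1)) := by
      have := Nat.one_le_two_pow (n := k); rw [pow_succ]; omega
    rw [hpow] at h
    obtain ⟨a, w1, v, h1, hv, rfl⟩ := h.split
    obtain ⟨b, f, w3, hf', h3, rfl⟩ := hv.split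
    have hf : ¬ Function.Bijective f := by
      clear hw h hv
      cases hf' with
      | succ f hw hf =>
        cases hw
        exact hf
    have hw1 : w1 ≠ 0 := by rintro rfl; exact hw (by simp)
    have hw3 : w3 ≠ 0 := by rintro rfl; exact hw (by simp)
    have l1 := ih h1 hw1
    have l3 := ih h3 hw3
    by_contra hcon
    -- if the bound fails, all three images have the same finite length
    have le1 : Module.length R (LinearMap.range ((w3.comp f).comp w1)) ≤
        Module.length R (LinearMap.range w1) := by
      rw [LinearMap.range_comp]
      exact Module.length_le_of_surjective _ ((w3.comp f).submoduleMap_surjective _)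
    have heq : ∀ x : ℕ∞, x + k ≤ c →
        x ≤ Module.length R (LinearMap.range ((w3.comp f).comp w1)) := by
      intro x hx
      generalize Module.length R (LinearMap.range ((w3.comp f).comp w1)) = y at hcon
      have hx' : x ≠ ⊤ := by rintro rfl; simp at hx
      obtain ⟨x, rfl⟩ := ENat.ne_top_iff_exists.1 hx'
      by_contra hxy
      have hy' : y ≠ ⊤ := by rintro rfl; simp at hxy
      obtain ⟨y, rfl⟩ := ENat.ne_top_iff_exists.1 hy'
      norm_cast at hx hxy hcon
      omega
    have hfin : ∀ {b : I} (g : Y b →ₗ[R] Y j), Module.length R (LinearMap.range g) ≠ ⊤ := fun g =>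
      ne_top_of_le_ne_top (ENat.natCast_ne_top c)
        ((Module.length_le_of_injective _ (Submodule.subtype_injective _)).trans (hc j))
    have hr : (LinearMap.range w1).map (w3.comp f) = LinearMap.range ((w3.comp f).comp w1) :=
      (LinearMap.range_comp _ _).symm
    have hr' : (LinearMap.range (f.comp w1)).map w3 = LinearMap.range ((w3.comp f).comp w1) :=
      (LinearMap.range_comp _ _).symm
    have c1 := isCompl_ker_of_length (w3.comp f) (LinearMap.range w1) (by rw [hr]; exact heq _ l1)
      (by
        rw [hr]
        exact (Module.length_le_of_injective _ (Submodule.inclusion_injective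
          (LinearMap.range_comp_le_range f w3))).trans (heq _ l3)) (hfin _)
    have c2 := isCompl_ker_of_length w3 (LinearMap.range (f.comp w1)) (by
        rw [hr', LinearMap.range_comp]
        exact (Module.length_le_of_surjective _ (f.submoduleMap_surjective _)).trans (heq _ l1))
      (by rw [hr']; exact heq _ l3) (hfin _)
    apply hf
    constructor
    · rcases (hY a).2 _ _ c1 with h0 | h0
      · exact absurd (LinearMap.range_eq_bot.1 h0) hw1
      · rw [← LinearMap.ker_eq_bot, eq_bot_iff, ← h0]
        exact LinearMap.ker_le_ker_comp f w3
    · rcases (hY b).2 _ _ c2 with h0 | h0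
      · refine absurd (LinearMap.range_eq_bot.1 h0) fun h0 => hw ?_
        rw [LinearMap.comp_assoc, h0, LinearMap.comp_zero]
      · rw [h0] at c2
        rw [← LinearMap.range_eq_top, eq_top_iff, ← eq_top_of_isCompl_bot c2]
        exact LinearMap.range_comp_le_range w1 f

/-- The Harada-Sai lemma. -/
theorem NC.harada_sai (hY : ∀ i, IsIndecomposableModule R (Y i)) (c : ℕ)
    (hc : ∀ i, Module.length R (Y i) ≤ c) {i j : I} {w : Y i →ₗ[R] Y j}
    (h : NC (2 ^ c - 1) i j w) : w = 0 := by
  by_contra hw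
  have h1 := NC.length_range_add_le hY c hc c h hw
  apply hw
  have h2 : Module.length R (LinearMap.range w) + (c : ℕ∞) ≤ 0 + c := by rwa [zero_add]
  have h3 := le_zero_iff.1 ((ENat.add_le_add_iff_right (ENat.natCast_ne_top c)).1 h2)
  rwa [Module.length_eq_zero_iff, Submodule.subsingleton_iff_eq_bot, LinearMap.range_eq_bot] at h3

end HaradaSai

/-! ### Finite generation of families of maps -/

section FiniteGeneration

/-- A linear map that vanishes on the kernel of a surjection `s` factors through `s`. -/
theorem exists_factor {R A B C : Type*} [Ring R] [AddCommGroup A] [Module R A] [AddCommGroup B]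
    [Module R B] [AddCommGroup C] [Module R C] (s : A →ₗ[R] B) (hs : Function.Surjective s)
    (ε : A →ₗ[R] C) (h : LinearMap.ker s ≤ LinearMap.ker ε) :
    ∃ e : B →ₗ[R] C, ∀ a, e (s a) = ε a := by
  refine ⟨((LinearMap.ker s).liftQ ε h).comp (s.quotKerEquivOfSurjective hs).symm.toLinearMap, ?_⟩
  intro a
  have : (s.quotKerEquivOfSurjective hs).symm (s a) = (LinearMap.ker s).mkQ a := by
    rw [LinearEquiv.symm_apply_eq]; rfl
  simp [this]

theorem exists_finset_of_finite {R A : Type*} [Ring R] [AddCommGroup A] [Module R A]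
    [Module.Finite R A] {ι : Type*} {B : ι → Type*} [∀ i, AddCommGroup (B i)]
    [∀ i, Module R (B i)] (π : ∀ i, A →ₗ[R] B i) (hπ : ∀ a, {i | π i a ≠ 0}.Finite) :
    ∃ Φ : Finset ι, ∀ i ∉ Φ, π i = 0 := by
  classical
  obtain ⟨S, hS⟩ := (Module.Finite.fg_top : (⊤ : Submodule R A).FG)
  refine ⟨S.biUnion fun a => (hπ a).toFinset, fun i hi => ?_⟩
  refine LinearMap.ext_on hS fun a ha => ?_
  by_contra hne
  exact hi (Finset.mem_biUnion.2 ⟨a, ha, by simpa using hne⟩)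

variable {R : Type u} [Ring R]

/-- Any family of maps into a Noetherian module is generated by finitely many of its members, with
coefficient maps between the sources. The kernel `Z` of the combined map from the direct sum `P` is
itself a direct sum of distributive modules; this is used to construct an endomorphism of `P` over
`N` with finitely generated image, and such an image meets only finitely many summands. -/
theorem SumDist.finite_generation (H : SumDist R) {N : Type u} [AddCommGroup N] [Module R N]
    [IsNoetherian R N] {τ : Type u} {Y : τ → Type u} [∀ t, AddCommGroup (Y t)]
    [∀ t, Module R (Y t)] (f : ∀ t, Y t →ₗ[R] N) :
    ∃ F : Finset τ, ∀ t, ∃ h : ∀ s, Y t →ₗ[R] Y s, ∀ x, f t x = ∑ s ∈ F, f s (h s x) := by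
  classical
  have hR := H.isNoetherianRing
  let P := DirectSum τ Y
  let g : P →ₗ[R] N := DirectSum.toModule R τ N f
  obtain ⟨n, q, hq⟩ := Module.Finite.exists_fin' R (LinearMap.range g)
  obtain ⟨p, hp⟩ : ∃ p : (Fin n → R) →ₗ[R] P, ∀ v, g (p v) = q v := by
    obtain ⟨p, hp⟩ := Module.projective_lifting_property g.rangeRestrict q
      g.surjective_rangeRestrict
    exact ⟨p, fun v => congrArg Subtype.val (LinearMap.congr_fun hp v)⟩
  let Z := LinearMap.ker g
  let K := LinearMap.ker (g.comp p)
  obtain ⟨ι, T, hi, ht, hd⟩ := H Z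
  obtain ⟨π, hπ, hπs, -, -⟩ := exists_components hi ht
  let pK : K →ₗ[R] Z := (p.comp K.subtype).codRestrict Z (fun κ => κ.2)
  obtain ⟨Φ, hΦ⟩ := exists_finset_of_finite (fun i => (π i).comp pK) (fun κ => hπ (pK κ))
  -- `σ` projects `Z` onto finitely many distributive summands containing the relations `pK`
  let σ : Z →ₗ[R] Z := ∑ i ∈ Φ, (T i).subtype.comp (π i)
  have hσ : ∀ κ : K, σ (pK κ) = pK κ := by
    intro κ
    have := hπs (pK κ) Φ (fun i hi => LinearMap.congr_fun (hΦ i hi) κ)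
    simpa [σ] using this
  -- `P` is the pushout of `Z` and `R ^ n` along `K`; replacing the inclusion of `Z` by `σ` yields
  -- an endomorphism `e` of `P` with finitely generated image such that `g ∘ e = g`
  let s : (Z × (Fin n → R)) →ₗ[R] P := Z.subtype.coprod p
  let ε : (Z × (Fin n → R)) →ₗ[R] P := (Z.subtype.comp σ).coprod p
  have hs : Function.Surjective s := by
    intro y
    obtain ⟨v, hv⟩ := hq ⟨g y, y, rfl⟩
    refine ⟨(⟨y - p v, ?_⟩, v), ?_⟩
    · rw [LinearMap.mem_ker, map_sub, hp, hv, sub_self]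
    · simp [s]
  have hker : LinearMap.ker s ≤ LinearMap.ker ε := by
    rintro ⟨z, v⟩ hzv
    rw [LinearMap.mem_ker] at hzv ⊢
    simp only [s, ε, LinearMap.coprod_apply, LinearMap.comp_apply, Submodule.subtype_apply]
      at hzv ⊢
    have hv : v ∈ K := by
      have := congrArg g hzv
      rw [map_add, LinearMap.mem_ker.1 z.2, zero_add, map_zero] at this
      exact this
    have hz : z = - pK ⟨v, hv⟩ := Subtype.ext (eq_neg_of_add_eq_zero_left hzv)
    rw [hz, map_neg, hσ]
    exact neg_add_cancel (p v)
  obtain ⟨e, he⟩ := exists_factor s hs ε hker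
  have hge : ∀ y, g (e y) = g y := by
    intro y
    obtain ⟨⟨z, v⟩, rfl⟩ := hs y
    rw [he]
    simp only [s, ε, LinearMap.coprod_apply, LinearMap.comp_apply, Submodule.subtype_apply, map_add]
    rw [LinearMap.mem_ker.1 z.2, LinearMap.mem_ker.1 (σ z).2]
  have hσfg : (LinearMap.range σ).FG := by
    have hle : LinearMap.range σ ≤ ⨆ i ∈ Φ, T i := by
      rintro _ ⟨z, rfl⟩
      simp only [σ, LinearMap.sum_apply]
      exact Submodule.sum_mem _ fun i hi => Submodule.mem_iSup_of_mem i
        (Submodule.mem_iSup_of_mem hi (π i z).2)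
    have hnoeth : IsNoetherian R (⨆ i ∈ Φ, T i : Submodule R Z) := by
      have : ∀ i : Φ, IsNoetherian R (T i) := fun i => H.noetherian_of_dist (hd i)
      have h2 : IsNoetherian R (⨆ i : Φ, T i : Submodule R Z) := isNoetherian_iSup
      rwa [iSup_subtype] at h2
    exact isNoetherian_submodule.1 hnoeth _ hle
  have hefin : Module.Finite R (LinearMap.range e) := by
    rw [Module.Finite.iff_fg]
    have : LinearMap.range e = (LinearMap.range σ).map Z.subtype ⊔ LinearMap.range p := by
      have h1 : LinearMap.range e = LinearMap.range ε := by
        have : e.comp s = ε := LinearMap.ext he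
        rw [← this, LinearMap.range_comp_of_range_eq_top _ (LinearMap.range_eq_top.2 hs)]
      rw [h1, LinearMap.range_coprod, LinearMap.range_comp]
    rw [this]
    exact (hσfg.map _).sup (Module.Finite.iff_fg.1 inferInstance)
  obtain ⟨F, hF⟩ := exists_finset_of_finite
    (fun t => (DirectSum.component R τ Y t).comp (LinearMap.range e).subtype)
    (fun y => DFinsupp.finite_support (y : P))
  refine ⟨F, fun t => ⟨fun s => (DirectSum.component R τ Y s).comp
    (e.comp (DirectSum.lof R τ Y t)), fun x => ?_⟩⟩
  obtain ⟨y, hy⟩ : ∃ y, y = e (DirectSum.lof R τ Y t x) := ⟨_, rfl⟩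
  have h1 : f t x = g y := by
    rw [hy, hge]
    exact (DirectSum.toModule_lof R t x).symm
  have h2 : y = ∑ s ∈ F, DirectSum.lof R τ Y s (DirectSum.component R τ Y s y) := by
    refine DFinsupp.ext fun i => ?_
    have : ∀ i, DirectSum.component R τ Y i y = DirectSum.component R τ Y i
        (∑ s ∈ F, DirectSum.lof R τ Y s (DirectSum.component R τ Y s y)) := by
      intro i
      rw [map_sum]
      by_cases hiF : i ∈ F
      · rw [Finset.sum_eq_single_of_mem i hiF, DirectSum.component.lof_self]
        intro b _ hb
        rw [DirectSum.component.of, dif_neg hb]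
      · rw [Finset.sum_eq_zero]
        · exact LinearMap.congr_fun (hF i hiF) ⟨y, _, hy.symm⟩
        · intro b hb
          rw [DirectSum.component.of, dif_neg]
          rintro rfl
          exact hiF hb
    exact this i
  rw [h1, h2, map_sum]
  refine Finset.sum_congr rfl fun s _ => ?_
  refine (DirectSum.toModule_lof R s _).trans ?_
  rw [hy]
  rfl

end FiniteGeneration

/-! ### Finitely many indecomposable modules -/

section FinitelyMany

theorem indec_congr {R M N : Type u} [Ring R] [AddCommGroup M] [Module R M] [AddCommGroup N]
    [Module R N] (e : M ≃ₗ[R] N) (h : IsIndecomposableModule R M) : IsIndecomposableModule R N := by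
  have hM := h.1
  refine ⟨e.symm.toEquiv.nontrivial, fun X P hc => ?_⟩
  have hc' := hc.map (Submodule.orderIsoMapComap e.symm)
  refine (h.2 _ _ hc').imp (fun h0 => ?_) (fun h0 => ?_) <;>
  exact (map_eq_bot_iff (Submodule.orderIsoMapComap e.symm)).1 h0

variable {R : Type u} [Ring R]

variable (R) in
/-- Indices for the finitely generated indecomposable modules: quotients of the modules `R ^ k`.
Every isomorphism class occurs, in general many times. -/
def Rep : Type u :=
  {p : Σ k : ℕ, Submodule R (Fin k → R) // IsIndecomposableModule R ((Fin p.1 → R) ⧸ p.2)}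

/-- The module indexed by an element of `Rep R`. -/
abbrev Rep.Mod (i : Rep R) : Type u := (Fin i.1.1 → R) ⧸ i.1.2

theorem exists_rep (M : Type u) [AddCommGroup M] [Module R M] [Module.Finite R M]
    (hM : IsIndecomposableModule R M) : ∃ i : Rep R, Nonempty (M ≃ₗ[R] i.Mod) := by
  obtain ⟨n, f, hf⟩ := Module.Finite.exists_fin' R M
  have e := (f.quotKerEquivOfSurjective hf).symm
  exact ⟨⟨⟨n, LinearMap.ker f⟩, indec_congr e hM⟩, ⟨e⟩⟩

theorem SumDist.dist_of_indec (H : SumDist R) {M : Type u} [AddCommGroup M] [Module R M]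
    (hM : IsIndecomposableModule R M) : IsDistributiveModule R M := by
  obtain ⟨ι, T, hi, ht, hd⟩ := H M
  have := hM.1
  obtain ⟨i, hne⟩ : ∃ i, T i ≠ ⊥ := by
    by_contra! hcon
    exact bot_ne_top ((iSup_eq_bot.2 hcon).symm.trans ht)
  have hc : IsCompl (T i) (⨆ (j) (_ : j ≠ i), T j) := by
    refine ⟨hi i, codisjoint_iff.2 ?_⟩
    rw [← ht, iSup_split_single T i]
  have hb := (hM.2 _ _ hc).resolve_left hne
  rw [hb] at hc
  have htop := eq_top_of_isCompl_bot hc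
  refine dist_of_injective (hd i) ((LinearMap.id : M →ₗ[R] M).codRestrict (T i)
    fun x => htop ▸ mem_top) fun x y hxy => congrArg Subtype.val hxy

/-- A finite set of indecomposables through which all maps (with property `Pf`) into a
Noetherian module `N` factor, up to taking sums. -/
theorem SumDist.exists_layer (H : SumDist R) (N : Type u) [AddCommGroup N] [Module R N]
    [IsNoetherian R N] (Pf : ∀ t : Rep R, (t.Mod →ₗ[R] N) → Prop) :
    ∃ S : Finset (Rep R), ∀ (t : Rep R) (f : t.Mod →ₗ[R] N), Pf t f →
      ∀ {X : Type u} [AddCommGroup X] [Module R X] (w : N →ₗ[R] X), w.comp f ≠ 0 →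
        ∃ s ∈ S, ∃ (f' : s.Mod →ₗ[R] N) (h : t.Mod →ₗ[R] s.Mod), Pf s f' ∧
          (w.comp f').comp h ≠ 0 := by
  classical
  obtain ⟨F, hF⟩ := H.finite_generation (N := N)
    (τ := Σ t : Rep R, {f : t.Mod →ₗ[R] N // Pf t f}) (Y := fun p => p.1.Mod) (fun p => p.2.1)
  refine ⟨F.image Sigma.fst, fun t f hf X _ _ w hw => ?_⟩
  obtain ⟨h, hh⟩ := hF ⟨t, f, hf⟩
  by_contra! hcon
  refine hw (LinearMap.ext fun x => ?_)
  have h1 : f x = _ := hh x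
  rw [LinearMap.comp_apply, h1, map_sum]
  refine Finset.sum_eq_zero fun s hs => ?_
  exact LinearMap.congr_fun (hcon s.1 (Finset.mem_image_of_mem _ hs) s.2.1 (h s) s.2.2) x

/-- Every nonzero finitely generated module maps nontrivially to `R ⧸ J`. -/
theorem exists_ne_zero_to_quot_jacobson (h : IsSemisimpleRing (R ⧸ Ring.jacobson R))
    (M : Type u) [AddCommGroup M] [Module R M] [Module.Finite R M] [Nontrivial M] :
    ∃ f : M →ₗ[R] (R ⧸ Ring.jacobson R), f ≠ 0 := by
  have hss := isSemisimpleModule_quot_jacobson h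
  obtain ⟨N, hN, -⟩ := (eq_top_or_exists_le_coatom (⊥ : Submodule R M)).resolve_left bot_ne_top
  have hsimple : IsSimpleModule R (M ⧸ N) := isSimpleModule_iff_isCoatom.2 hN
  obtain ⟨I, hI, ⟨e⟩⟩ := isSimpleModule_iff_quot_maximal.1 hsimple
  have hJI : Ring.jacobson R ≤ I := Ring.jacobson_le_of_isMaximal I
  let q : (R ⧸ Ring.jacobson R) →ₗ[R] (R ⧸ I) := Submodule.factor hJI
  have hq : Function.Surjective q := Submodule.factor_surjective hJI
  obtain ⟨C, hC⟩ := exists_isCompl (LinearMap.ker q)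
  have hbij : Function.Bijective (q.comp C.subtype) := by
    constructor
    · rw [← LinearMap.ker_eq_bot, LinearMap.ker_comp, eq_bot_iff]
      intro x hx
      have := Submodule.disjoint_def.1 hC.disjoint x.1 hx x.2
      simpa using this
    · intro y
      obtain ⟨x, rfl⟩ := hq y
      obtain ⟨a, ha, b, hb, rfl⟩ := Submodule.mem_sup.1
        ((codisjoint_iff.1 hC.codisjoint) ▸ mem_top : x ∈ LinearMap.ker q ⊔ C)
      refine ⟨⟨b, hb⟩, ?_⟩
      rw [map_add, LinearMap.mem_ker.1 ha, zero_add]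
      rfl
  let E := LinearEquiv.ofBijective _ hbij
  refine ⟨C.subtype.comp (E.symm.toLinearMap.comp (e.toLinearMap.comp N.mkQ)), fun h0 => ?_⟩
  apply hN.1
  rw [eq_top_iff]
  intro x _
  have := LinearMap.congr_fun h0 x
  simpa using this

/-- Up to isomorphism there are finitely many indecomposables. Starting from the maps into `R ⧸ J`
and continuing with the non-isomorphisms into the members of the previous layer, finite layers
`L k` arise. An indecomposable isomorphic to no member of `L k` for `k < 2 ^ c - 1` would factor a
nonzero map to `R ⧸ J` through `2 ^ c - 1` non-isomorphisms, against the Harada-Sai lemma. -/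
theorem SumDist.finite_reps (H : SumDist R) :
    ∃ S : Finset (Rep R), ∀ t : Rep R, ∃ s ∈ S, Nonempty (t.Mod ≃ₗ[R] s.Mod) := by
  classical
  have hN := H.isNoetherianRing
  have hA := H.isArtinianRing
  obtain ⟨c, hc⟩ := ENat.ne_top_iff_exists.1 (Module.length_ne_top (R := R) (M := R))
  have hY : ∀ t : Rep R, IsIndecomposableModule R t.Mod := fun t => t.2
  have hlen : ∀ t : Rep R, Module.length R t.Mod ≤ c := fun t => by
    rw [hc]; exact H.length_le (H.dist_of_indec (hY t))
  obtain ⟨S0, hS0⟩ := H.exists_layer (R ⧸ Ring.jacobson R) (fun _ _ => True)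
  choose S hS using fun r : Rep R => H.exists_layer r.Mod (fun _ f => ¬ Function.Bijective f)
  let L : ℕ → Finset (Rep R) := fun k => Nat.rec S0 (fun _ L => L.biUnion S) k
  refine ⟨(Finset.range (2 ^ c - 1)).biUnion L, fun t => ?_⟩
  by_contra! hcon
  have key : ∀ k ≤ 2 ^ c - 1, ∃ s ∈ L k, ∃ (s0 : Rep R) (w : s.Mod →ₗ[R] s0.Mod)
      (g0 : s0.Mod →ₗ[R] (R ⧸ Ring.jacobson R)) (h : t.Mod →ₗ[R] s.Mod),
      NC (Y := Rep.Mod) k s s0 w ∧ (g0.comp w).comp h ≠ 0 := by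
    intro k
    induction k with
    | zero =>
      intro _
      have := (hY t).1
      obtain ⟨f, hf⟩ := exists_ne_zero_to_quot_jacobson H.semisimple t.Mod
      obtain ⟨s, hs, f', h, -, hne⟩ := hS0 t f trivial LinearMap.id hf
      exact ⟨s, hs, s, LinearMap.id, f', h, NC.zero (Y := Rep.Mod) s, hne⟩
    | succ k ih =>
      intro hk
      obtain ⟨s, hs, s0, w, g0, h, hw, hne⟩ := ih (by omega)
      have hh : ¬ Function.Bijective h := fun hb =>
        (hcon s (Finset.mem_biUnion.2 ⟨k, Finset.mem_range.2 (by omega), hs⟩)).false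
          (LinearEquiv.ofBijective h hb)
      obtain ⟨s', hs', f', h', hf', hne'⟩ := hS s t h hh (g0.comp w) hne
      refine ⟨s', Finset.mem_biUnion.2 ⟨s, hs, hs'⟩, s0, w.comp f', g0, h', ?_, hne'⟩
      have := (NC.succ (Y := Rep.Mod) f' (NC.zero (Y := Rep.Mod) s') hf').append hw
      rwa [LinearMap.comp_id, zero_add, add_comm] at this
  obtain ⟨s, -, s0, w, g0, h, hw, hne⟩ := key _ le_rfl
  have hw0 := hw.harada_sai hY c hlen
  rw [hw0] at hne
  simp at hne

end FinitelyMany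

section Forward

variable {A : Type u} [Ring A]

variable (A) in
/-- The regular right module `A` is the left regular module of the opposite ring. -/
def opEquiv : Aᵐᵒᵖ ≃ₗ[Aᵐᵒᵖ] A where
  toFun := MulOpposite.unop
  invFun := MulOpposite.op
  map_add' _ _ := rfl
  map_smul' _ _ := rfl
  left_inv _ := rfl
  right_inv _ := rfl

theorem SumDist.hasFiniteRepresentationType (H : SumDist Aᵐᵒᵖ) : HasFiniteRepresentationType A := by
  have hA := H.isArtinianRing
  refine ⟨isArtinian_of_linearEquiv (opEquiv A), ?_⟩
  obtain ⟨S, hS⟩ := H.finite_reps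
  let E : ∀ k : ℕ, (Fin k → Aᵐᵒᵖ) ≃ₗ[Aᵐᵒᵖ] (Fin k → A) := fun k =>
    LinearEquiv.piCongrRight fun _ => opEquiv A
  refine ⟨S.card, fun i => (S.equivFin.symm i).1.1.1,
    fun i => (S.equivFin.symm i).1.1.2.map (E _).toLinearMap, fun M _ _ hf hi => ?_⟩
  obtain ⟨t, ⟨e1⟩⟩ := exists_rep M hi
  obtain ⟨s, hs, ⟨e2⟩⟩ := hS t
  obtain ⟨i, rfl⟩ : ∃ i, (S.equivFin.symm i).1 = s := ⟨S.equivFin ⟨s, hs⟩, by simp⟩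
  exact ⟨i, ⟨(e1.trans e2).trans (Submodule.Quotient.equiv _ _ (E _) rfl)⟩⟩

end Forward

/-! ### Decomposition of arbitrary modules in the bounded case -/

section Converse

variable {R : Type u} [Ring R]

/-- A module of finite length splits into finitely many indecomposables; `a` and `b` are the
injections and the projections. -/
theorem exists_decomp [IsArtinianRing R] (n : ℕ) : ∀ (M : Type u) [AddCommGroup M] [Module R M]
    [Module.Finite R M], Module.length R M ≤ n → ∃ (κ : Type) (_ : Fintype κ) (X : κ → Rep R)
      (a : ∀ k, (X k).Mod →ₗ[R] M) (b : ∀ k, M →ₗ[R] (X k).Mod), ∀ x, ∑ k, a k (b k x) = x := by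
  induction n with
  | zero =>
    intro M _ _ _ h
    have : Subsingleton M := Module.length_eq_zero_iff.1 (le_zero_iff.1 h)
    exact ⟨Empty, inferInstance, fun k => k.elim, fun k => k.elim, fun k => k.elim,
      fun x => Subsingleton.elim _ _⟩
  | succ n ih =>
    intro M _ _ _ h
    by_cases hM : IsIndecomposableModule R M
    · obtain ⟨i, ⟨e⟩⟩ := exists_rep M hM
      exact ⟨Unit, inferInstance, fun _ => i, fun _ => e.symm.toLinearMap,
        fun _ => e.toLinearMap, fun x => by simp⟩
    by_cases hs : Subsingleton M
    · exact ⟨Empty, inferInstance, fun k => k.elim, fun k => k.elim, fun k => k.elim,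
        fun x => Subsingleton.elim _ _⟩
    rw [not_subsingleton_iff_nontrivial] at hs
    obtain ⟨N, P, hc, hN, hP⟩ : ∃ N P : Submodule R M, IsCompl N P ∧ N ≠ ⊥ ∧ P ≠ ⊥ := by
      by_contra! hcon
      exact hM ⟨hs, fun N P hc => or_iff_not_imp_left.2 (hcon N P hc)⟩
    have hlt : ∀ Q : Submodule R M, Q ≠ ⊤ → Module.length R Q ≤ n := by
      intro Q hQ
      have h1 := (Submodule.length_lt hQ).trans_le h
      exact Order.le_of_lt_add_one (by simpa using h1)
    obtain ⟨κ1, _, X1, a1, b1, h1⟩ := ih N (hlt N fun h0 => hP (by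
      rw [h0] at hc; exact eq_bot_of_top_isCompl hc))
    obtain ⟨κ2, _, X2, a2, b2, h2⟩ := ih P (hlt P fun h0 => hN (by
      rw [h0] at hc; exact eq_bot_of_isCompl_top hc))
    refine ⟨κ1 ⊕ κ2, inferInstance, Sum.elim X1 X2,
      Sum.rec (fun k => N.subtype.comp (a1 k)) (fun k => P.subtype.comp (a2 k)),
      Sum.rec (fun k => (b1 k).comp (N.projectionOnto P hc))
        (fun k => (b2 k).comp (P.projectionOnto N hc.symm)), fun x => ?_⟩
    rw [Fintype.sum_sum_type]
    have e1 := congrArg N.subtype (h1 (N.projectionOnto P hc x))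
    have e2 := congrArg P.subtype (h2 (P.projectionOnto N hc.symm x))
    rw [map_sum] at e1 e2
    refine (congrArg₂ (· + ·) e1 e2).trans ?_
    exact projection_add_projection_eq_self hc x

/-- Every finite linear system over `R` with constants in `W` that is solvable in `M` is solvable
in `W`. A system is encoded by a submodule `K` of some `R ^ n`, its constants and a solution by
a map `β` with `β K ⊆ W`. -/
def IsPureIn {M : Type u} [AddCommGroup M] [Module R M] (W : Submodule R M) : Prop :=
  ∀ (n : ℕ) (K : Submodule R (Fin n → R)) (β : (Fin n → R) →ₗ[R] M), (∀ v ∈ K, β v ∈ W) →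
    ∃ β' : (Fin n → R) →ₗ[R] M, (∀ v, β' v ∈ W) ∧ ∀ v ∈ K, β' v = β v

variable {M : Type u} [AddCommGroup M] [Module R M]

theorem isPureIn_bot : IsPureIn (⊥ : Submodule R M) := fun _ _ β h =>
  ⟨0, fun _ => by simp, fun v hv => ((mem_bot R).1 (h v hv)).symm⟩

theorem isPureIn_sSup_of_directedOn [IsNoetherianRing R] {s : Set (Submodule R M)}
    (hs : s.Nonempty) (hd : DirectedOn (· ≤ ·) s) (h : ∀ W ∈ s, IsPureIn W) :
    IsPureIn (sSup s) := by
  intro n K β hβ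
  have hfg : (K.map β).FG := (IsNoetherian.noetherian K).map β
  obtain ⟨W, hW, hle⟩ := (CompleteLattice.isCompactElement_iff_le_of_directed_sSup_le _ _).1
    ((Submodule.fg_iff_compact _).1 hfg) s hs hd (by
      rintro _ ⟨v, hv, rfl⟩
      exact hβ v hv)
  obtain ⟨β', h1, h2⟩ := h W hW n K β fun v hv => hle ⟨v, hv, rfl⟩
  exact ⟨β', fun v => le_sSup hW (h1 v), h2⟩

/-- If the indecomposables have bounded length, a nonzero module `M` receives a map from some
indecomposable that splits off every finitely generated module through which it factors.
Otherwise one could compose arbitrarily many non-isomorphisms with nonzero result. -/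
theorem exists_split_map [IsArtinianRing R] (c : ℕ)
    (hc : ∀ t : Rep R, Module.length R t.Mod ≤ c) [Nontrivial M] :
    ∃ (j : Rep R) (g : j.Mod →ₗ[R] M), ∀ (Z : Type u) [AddCommGroup Z] [Module R Z]
      [Module.Finite R Z] (h : j.Mod →ₗ[R] Z) (g' : Z →ₗ[R] M), g'.comp h = g →
        ∃ r : Z →ₗ[R] j.Mod, r.comp h = LinearMap.id := by
  by_contra! hcon
  have hdec : ∀ (Z : Type u) [AddCommGroup Z] [Module R Z] [Module.Finite R Z],
      ∃ (κ : Type) (_ : Fintype κ) (X : κ → Rep R) (a : ∀ k, (X k).Mod →ₗ[R] Z)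
        (b : ∀ k, Z →ₗ[R] (X k).Mod), ∀ x, ∑ k, a k (b k x) = x := by
    intro Z _ _ _
    obtain ⟨m, hm⟩ := ENat.ne_top_iff_exists.1 (Module.length_ne_top (R := R) (M := Z))
    exact exists_decomp m Z hm.symm.le
  have key : ∀ n, ∃ (i j : Rep R) (w : i.Mod →ₗ[R] j.Mod) (g : j.Mod →ₗ[R] M),
      NC (Y := Rep.Mod) n i j w ∧ g.comp w ≠ 0 := by
    intro n
    induction n with
    | zero =>
      obtain ⟨x, hx⟩ := exists_ne (0 : M)
      obtain ⟨κ, _, X, a, b, hab⟩ := hdec (span R {x})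
      by_contra! h0
      apply hx
      have h1 := congrArg Subtype.val (hab ⟨x, mem_span_singleton_self x⟩)
      refine h1.symm.trans ?_
      rw [← Submodule.subtype_apply, map_sum]
      refine Finset.sum_eq_zero fun k _ => ?_
      exact LinearMap.congr_fun (h0 (X k) (X k) LinearMap.id ((span R {x}).subtype.comp (a k))
        (NC.zero (Y := Rep.Mod) _)) _
    | succ n ih =>
      obtain ⟨i, j, w, g, hw, hne⟩ := ih
      obtain ⟨Z, _, _, _, h, g', rfl, hr⟩ := hcon j g
      obtain ⟨κ, _, X, a, b, hab⟩ := hdec Z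
      by_contra! h0
      apply hne
      refine LinearMap.ext fun x => ?_
      change g' (h (w x)) = 0
      rw [← hab (h (w x)), map_sum]
      refine Finset.sum_eq_zero fun k _ => ?_
      have hnb : ¬ Function.Bijective ((b k).comp h) := by
        intro hb
        refine hr ((LinearEquiv.ofBijective _ hb).symm.toLinearMap.comp (b k)) ?_
        refine LinearMap.ext fun y => ?_
        exact (LinearEquiv.ofBijective _ hb).symm_apply_apply y
      exact LinearMap.congr_fun (h0 i (X k) _ (g'.comp (a k))
        (NC.succ (Y := Rep.Mod) ((b k).comp h) hw hnb)) x
  obtain ⟨i, j, w, g, hw, hne⟩ := key (2 ^ c - 1)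
  rw [hw.harada_sai (fun t : Rep R => t.2) c hc, LinearMap.comp_zero] at hne
  exact hne rfl

/-- The splitting map of `exists_split_map` is injective with pure image. -/
theorem exists_pure_embedding [IsArtinianRing R] (c : ℕ)
    (hc : ∀ t : Rep R, Module.length R t.Mod ≤ c) [Nontrivial M] :
    ∃ (j : Rep R) (g : j.Mod →ₗ[R] M), Function.Injective g ∧ IsPureIn (LinearMap.range g) := by
  obtain ⟨j, g, hg⟩ := exists_split_map (M := M) c hc
  refine ⟨j, g, ?_, ?_⟩
  · obtain ⟨r, hr⟩ := hg (LinearMap.range g) g.rangeRestrict (LinearMap.range g).subtype rfl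
    intro x y hxy
    have h1 : g.rangeRestrict x = g.rangeRestrict y := Subtype.ext hxy
    have h2 := congrArg r h1
    rwa [← LinearMap.comp_apply, ← LinearMap.comp_apply, hr] at h2
  · intro n K β hβ
    have hfin : Module.Finite R (LinearMap.range g ⊔ LinearMap.range β : Submodule R M) :=
      Module.Finite.iff_fg.2
        ((Module.Finite.iff_fg.1 inferInstance).sup (Module.Finite.iff_fg.1 inferInstance))
    let h := g.codRestrict (LinearMap.range g ⊔ LinearMap.range β)
      fun x => mem_sup_left ⟨x, rfl⟩
    let β₁ := β.codRestrict (LinearMap.range g ⊔ LinearMap.range β)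
      fun x => mem_sup_right ⟨x, rfl⟩
    obtain ⟨r, hr⟩ := hg _ h (Submodule.subtype _) rfl
    refine ⟨g.comp (r.comp β₁), fun v => ⟨_, rfl⟩, fun v hv => ?_⟩
    obtain ⟨y, hy⟩ := hβ v hv
    have h1 : β₁ v = h y := Subtype.ext hy.symm
    rw [LinearMap.comp_apply, LinearMap.comp_apply, h1, ← hy]
    exact congrArg g (LinearMap.congr_fun hr y)

/-- A proper pure submodule can be enlarged by an independent indecomposable summand. -/
theorem IsPureIn.exists_disjoint [IsArtinianRing R] (c : ℕ)
    (hc : ∀ t : Rep R, Module.length R t.Mod ≤ c) {W : Submodule R M} (hW : IsPureIn W)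
    (hne : W ≠ ⊤) :
    ∃ N : Submodule R M, Module.Finite R N ∧ IsIndecomposableModule R N ∧ Disjoint W N ∧
      IsPureIn (W ⊔ N) := by
  have : Nontrivial (M ⧸ W) := Submodule.Quotient.nontrivial_iff.2 hne
  obtain ⟨j, g₀, hg₀, hp⟩ := exists_pure_embedding (M := M ⧸ W) c hc
  obtain ⟨β, hβ⟩ := Module.projective_lifting_property W.mkQ (g₀.comp j.1.2.mkQ) W.mkQ_surjective
  have hβ0 : ∀ v, W.mkQ (β v) = g₀ (j.1.2.mkQ v) := fun v => LinearMap.congr_fun hβ v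
  have mkQ0 : ∀ {x : M}, W.mkQ x = 0 ↔ x ∈ W := fun {x} => by
    rw [mkQ_apply, Submodule.Quotient.mk_eq_zero]
  obtain ⟨β', h1, h2⟩ := hW _ j.1.2 β fun v hv => by
    rw [← mkQ0, hβ0, mkQ_apply, (Submodule.Quotient.mk_eq_zero _).2 hv, map_zero]
  -- the corrected lift `β - β'` descends to a lift of `g₀`
  let g : j.Mod →ₗ[R] M := j.1.2.liftQ (β - β') fun v hv => by
    rw [LinearMap.mem_ker, LinearMap.sub_apply, h2 v hv, sub_self]
  have hg : ∀ y, W.mkQ (g y) = g₀ y := by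
    intro y
    obtain ⟨v, rfl⟩ := j.1.2.mkQ_surjective y
    change W.mkQ (β v - β' v) = _
    rw [map_sub, mkQ0.2 (h1 v), sub_zero, hβ0]
  have hgi : Function.Injective g := fun x y hxy => hg₀ (by rw [← hg, ← hg, hxy])
  refine ⟨LinearMap.range g, inferInstance, indec_congr (LinearEquiv.ofInjective g hgi) j.2,
    ?_, ?_⟩
  · rw [Submodule.disjoint_def]
    rintro _ hx ⟨y, rfl⟩
    have h3 : g₀ y = 0 := by rw [← hg, mkQ0.2 hx]
    rw [hg₀ (h3.trans (map_zero g₀).symm), map_zero]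
  · intro n K γ hγ
    obtain ⟨γ', h3, h4⟩ := hp n K (W.mkQ.comp γ) fun v hv => by
      obtain ⟨a, ha, _, ⟨y, rfl⟩, hay⟩ := mem_sup.1 (hγ v hv)
      exact ⟨y, by rw [LinearMap.comp_apply, ← hay, map_add, mkQ0.2 ha, zero_add, hg]⟩
    let δ : (Fin n → R) →ₗ[R] j.Mod :=
      (LinearEquiv.ofInjective g₀ hg₀).symm.toLinearMap.comp (γ'.codRestrict _ h3)
    have hδ : ∀ v, g₀ (δ v) = γ' v := fun v =>
      congrArg Subtype.val ((LinearEquiv.ofInjective g₀ hg₀).apply_symm_apply ⟨γ' v, h3 v⟩)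
    obtain ⟨ε, h5, h6⟩ := hW n K (γ - g.comp δ) fun v hv => by
      rw [← mkQ0, LinearMap.sub_apply, map_sub, LinearMap.comp_apply, hg, hδ, h4 v hv]
      exact sub_self _
    refine ⟨ε + g.comp δ, fun v => add_mem (mem_sup_left (h5 v)) (mem_sup_right ⟨_, rfl⟩),
      fun v hv => ?_⟩
    rw [LinearMap.add_apply, h6 v hv, LinearMap.sub_apply, sub_add_cancel]

/-- Over a left Artinian ring whose indecomposables have bounded length, every module is a direct
sum of finitely generated indecomposable modules. -/
theorem exists_direct_sum [IsArtinianRing R] (c : ℕ)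
    (hc : ∀ t : Rep R, Module.length R t.Mod ≤ c) (M : Type u) [AddCommGroup M] [Module R M] :
    ∃ m : Set (Submodule R M), sSupIndep m ∧ sSup m = ⊤ ∧
      ∀ N ∈ m, IsIndecomposableModule R N := by
  let S : Set (Set (Submodule R M)) :=
    {m | (∀ N ∈ m, IsIndecomposableModule R N) ∧ sSupIndep m ∧ IsPureIn (sSup m)}
  obtain ⟨m, hm, hmax⟩ := zorn_subset S (by
    intro C hC hch
    rcases C.eq_empty_or_nonempty with rfl | hne
    · refine ⟨∅, ⟨by simp, by simp, ?_⟩, by simp⟩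
      rw [sSup_empty]
      exact isPureIn_bot
    · refine ⟨⋃₀ C, ⟨?_, ?_, ?_⟩, fun s hs => Set.subset_sUnion_of_mem hs⟩
      · rintro N ⟨s, hs, hN⟩
        exact (hC hs).1 N hN
      · exact iSupIndep_sUnion_of_directed hch.directedOn fun s hs => (hC hs).2.1
      · rw [sSup_sUnion, ← sSup_image]
        refine isPureIn_sSup_of_directedOn (hne.image _) ?_ ?_
        · rintro _ ⟨s, hs, rfl⟩ _ ⟨t, ht, rfl⟩
          rcases hch.total hs ht with h | h
          · exact ⟨_, ⟨t, ht, rfl⟩, sSup_le_sSup h, le_rfl⟩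
          · exact ⟨_, ⟨s, hs, rfl⟩, le_rfl, sSup_le_sSup h⟩
        · rintro _ ⟨s, hs, rfl⟩
          exact (hC hs).2.2)
  refine ⟨m, hm.2.1, ?_, hm.1⟩
  by_contra hne
  obtain ⟨N, -, hN, hd, hp⟩ := hm.2.2.exists_disjoint c hc hne
  have hins : insert N m ∈ S := by
    refine ⟨?_, ?_, ?_⟩
    · rintro P (rfl | hP)
      · exact hN
      · exact hm.1 P hP
    · intro P hP
      by_cases hPN : P = N
      · subst hPN
        refine hd.symm.mono_right (sSup_le_sSup ?_)
        rintro Q ⟨rfl | hQ, hQ'⟩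
        · exact absurd rfl hQ'
        · exact hQ
      · have hPm : P ∈ m := hP.resolve_left hPN
        have h1 := hm.2.1 hPm
        refine (h1.disjoint_sup_right_of_disjoint_sup_left (hd.mono_left
          (sup_le (le_sSup hPm) (sSup_le_sSup Set.sdiff_subset)))).mono_right (sSup_le ?_)
        rintro Q ⟨rfl | hQ, hQ'⟩
        · exact le_sup_right
        · exact le_sup_of_le_left (le_sSup ⟨hQ, hQ'⟩)
    · rwa [sSup_insert, sup_comm]
  have hNm : N ∈ m := hmax hins (Set.subset_insert N m) (Set.mem_insert N m)
  have hbot : N = ⊥ := disjoint_self.1 (hd.mono_left (le_sSup hNm))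
  have := hN.1
  exact (Submodule.nontrivial_iff_ne_bot.1 this) hbot

end Converse

section Backward

variable {A : Type u} [Ring A]

theorem sumDist_of_hasFiniteRepresentationType (h : HasFiniteRepresentationType A)
    (hd : ∀ (M : Type u) [AddCommGroup M] [Module Aᵐᵒᵖ M],
      IsIndecomposableModule Aᵐᵒᵖ M → IsDistributiveModule Aᵐᵒᵖ M) : SumDist Aᵐᵒᵖ := by
  obtain ⟨hA, n, k, N, hN⟩ := h
  have hR : IsArtinianRing Aᵐᵒᵖ := isArtinian_of_linearEquiv (opEquiv A).symm
  have hfin : Module.Finite Aᵐᵒᵖ A := Module.Finite.equiv (opEquiv A)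
  have hlen : ∀ i, ∃ c : ℕ, (c : ℕ∞) = Module.length Aᵐᵒᵖ ((Fin (k i) → A) ⧸ N i) := fun i =>
    ENat.ne_top_iff_exists.1 Module.length_ne_top
  choose c hc using hlen
  intro M _ _
  obtain ⟨m, h1, h2, h3⟩ := exists_direct_sum (R := Aᵐᵒᵖ) (Finset.univ.sup c) (fun t => by
    obtain ⟨i, ⟨e⟩⟩ := hN t.Mod inferInstance t.2
    rw [e.length_eq, ← hc]
    exact_mod_cast Finset.le_sup (Finset.mem_univ i)) M
  exact ⟨m, Subtype.val, (sSupIndep_iff m).1 h1, by rw [← sSup_eq_iSup', h2],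
    fun N => hd _ (h3 N.1 N.2)⟩

end Backward

end DistSum

theorem stmt8 (A : Type u) [Ring A] :
    (∀ (M : Type u) [AddCommGroup M] [Module Aᵐᵒᵖ M],
        ∃ (ι : Type u) (T : ι → Submodule Aᵐᵒᵖ M),
          iSupIndep T ∧ iSup T = ⊤ ∧ ∀ i, IsDistributiveModule Aᵐᵒᵖ (T i)) ↔
      (HasFiniteRepresentationType A ∧
        ∀ (M : Type u) [AddCommGroup M] [Module Aᵐᵒᵖ M],
          IsIndecomposableModule Aᵐᵒᵖ M → IsDistributiveModule Aᵐᵒᵖ M) := by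
  constructor
  · intro h
    have H : DistSum.SumDist Aᵐᵒᵖ := fun M => h M
    exact ⟨H.hasFiniteRepresentationType, fun M _ _ hM => H.dist_of_indec hM⟩
  · rintro ⟨hA, hd⟩ M _ _
    exact DistSum.sumDist_of_hasFiniteRepresentationType hA hd M
end
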